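/- arXiv:2208.12182 — 11 statements merged into one kernel-verified Lean document; each statement's English description precedes it below -/
import Mathlib

section
/- Let n be a positive integer and let a : Fin n → ℝ with a i > 0 for all i. Then ∫_ℝ (sin(2πx)/(2πx))² · ∏_{i=1}^{n} cos(2π a_i x)² dx ≥ 1/2^{n+1}, and equality holds if and only if the subset sums of {a_1,…,a_n} are 1-separated, i.e. for all subsets S ≠ T of {1,…,n} one has |∑_{i∈S} a_i − ∑_{i∈T} a_i| ≥ 1. -/
open Real MeasureTheory Finset

/-- The factor `sin(2πx)/(2πx)`, interpreted as its limit value `1` at `x = 0`. -/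
noncomputable def sinc2pi (x : ℝ) : ℝ :=
  if x = 0 then 1 else Real.sin (2 * π * x) / (2 * π * x)

/-- The subset sums of the family `a` are 1-separated. -/
def SepSums {n : ℕ} (a : Fin n → ℝ) : Prop :=
  ∀ S T : Finset (Fin n), S ≠ T → 1 ≤ |∑ i ∈ S, a i - ∑ i ∈ T, a i|

lemma four_cos_sq (t : ℝ) :
    Complex.normSq (1 + Complex.exp (((2 * t : ℝ) : ℂ) * Complex.I)) = 4 * Real.cos t ^ 2 := by
  rw [Complex.normSq_apply]
  simp only [Complex.add_re, Complex.add_im, Complex.one_re, Complex.one_im,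
    Complex.exp_ofReal_mul_I_re, Complex.exp_ofReal_mul_I_im]
  rw [Real.cos_two_mul, Real.sin_two_mul]
  nlinarith [Real.sin_sq_add_cos_sq t]

lemma prod_cos_sq {n : ℕ} (t : Fin n → ℝ) :
    ∏ i, Real.cos (t i) ^ 2 = (1 / 4 ^ n) * ∑ S : Finset (Fin n), ∑ T : Finset (Fin n),
      Real.cos (2 * (∑ i ∈ S, t i - ∑ i ∈ T, t i)) := by
  have h1 : Complex.normSq (∏ i, (1 + Complex.exp (((2 * t i : ℝ) : ℂ) * Complex.I)))
      = 4 ^ n * ∏ i, Real.cos (t i) ^ 2 := by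
    rw [map_prod]
    simp only [four_cos_sq]
    rw [Finset.prod_mul_distrib]
    simp
  have h2 : ∏ i, (1 + Complex.exp (((2 * t i : ℝ) : ℂ) * Complex.I))
      = ∑ S : Finset (Fin n), Complex.exp (((2 * ∑ i ∈ S, t i : ℝ) : ℂ) * Complex.I) := by
    rw [Finset.prod_one_add]
    rw [Finset.powerset_univ]
    refine Finset.sum_congr rfl fun S _ => ?_
    rw [← Complex.exp_sum, Finset.mul_sum, Complex.ofReal_sum, Finset.sum_mul]
  rw [h2, Complex.normSq_apply] at h1
  simp only [Complex.re_sum, Complex.im_sum,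
    Complex.exp_ofReal_mul_I_re, Complex.exp_ofReal_mul_I_im] at h1
  rw [Finset.sum_mul_sum, Finset.sum_mul_sum, ← Finset.sum_add_distrib] at h1
  simp only [← Finset.sum_add_distrib, ← Real.cos_sub, ← mul_sub] at h1
  rw [h1]
  field_simp

/-- The tent function. -/
noncomputable def tent (y : ℝ) : ℝ := max 0 (2 - |y|) / 4

lemma tent_cont : Continuous tent := by unfold tent; fun_prop

lemma tent_zero {y : ℝ} (h : 2 ≤ |y|) : tent y = 0 := by
  unfold tent; rw [max_eq_left (by linarith)]; simp

lemma tent_supp : HasCompactSupport (fun y => (tent y : ℂ)) := by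
  refine HasCompactSupport.intro (isCompact_Icc (a := (-2 : ℝ)) (b := 2)) fun y hy => ?_
  have : 2 ≤ |y| := by
    by_contra h
    push Not at h
    exact hy ⟨(abs_lt.1 h).1.le, (abs_lt.1 h).2.le⟩
  simp [tent_zero this]

lemma tent_int : Integrable (fun y => (tent y : ℂ)) :=
  (Complex.continuous_ofReal.comp tent_cont).integrable_of_hasCompactSupport tent_supp

lemma tent_exp (c : ℂ) (hc : c ≠ 0) :
    ∫ y : ℝ, Complex.exp (c * y) * (tent y : ℂ)
      = (Complex.exp (2 * c) + Complex.exp (-2 * c) - 2) / (4 * c ^ 2) := by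
  have hcont : Continuous (fun y : ℝ => Complex.exp (c * y) * (tent y : ℂ)) := by
    have := tent_cont
    fun_prop
  have e1 : ∫ y : ℝ, Complex.exp (c * y) * (tent y : ℂ)
      = ∫ y in (-2:ℝ)..2, Complex.exp (c * y) * (tent y : ℂ) := by
    rw [intervalIntegral.integral_of_le (by norm_num)]
    symm
    apply setIntegral_eq_integral_of_forall_compl_eq_zero
    intro y hy
    have : 2 ≤ |y| := by
      by_contra h
      push Not at h
      exact hy ⟨(abs_lt.1 h).1, (abs_lt.1 h).2.le⟩
    simp [tent_zero this]
  have hexp : ∀ y : ℝ, HasDerivAt (fun y : ℝ => Complex.exp (c * y)) (Complex.exp (c * y) * c) y := by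
    intro y
    have := ((hasDerivAt_id (y:ℂ)).const_mul c).cexp.comp_ofReal
    simpa using this
  have hid : ∀ y : ℝ, HasDerivAt (fun y : ℝ => (y : ℂ)) 1 y := fun y =>
    (hasDerivAt_id (y:ℂ)).comp_ofReal
  have e2 : ∫ y in (-2:ℝ)..0, Complex.exp (c * y) * (tent y : ℂ)
      = ∫ y in (-2:ℝ)..0, Complex.exp (c * y) * ((2 + y) / 4 : ℂ) := by
    apply intervalIntegral.integral_congr
    intro y hy
    rw [Set.uIcc_of_le (by norm_num)] at hy
    have : tent y = (2 + y) / 4 := by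
      unfold tent; rw [abs_of_nonpos hy.2, max_eq_right (by linarith [hy.1])]; ring
    simp [this]
  have e3 : ∫ y in (0:ℝ)..2, Complex.exp (c * y) * (tent y : ℂ)
      = ∫ y in (0:ℝ)..2, Complex.exp (c * y) * ((2 - y) / 4 : ℂ) := by
    apply intervalIntegral.integral_congr
    intro y hy
    rw [Set.uIcc_of_le (by norm_num)] at hy
    have : tent y = (2 - y) / 4 := by
      unfold tent; rw [abs_of_nonneg hy.1, max_eq_right (by linarith [hy.2])]
    simp [this]
  have e4 : ∫ y in (-2:ℝ)..0, Complex.exp (c * y) * ((2 + y) / 4 : ℂ)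
      = Complex.exp (c * (0:ℝ)) * (((2 + (0:ℝ)) / c - 1 / c ^ 2) / 4)
        - Complex.exp (c * (-2:ℝ)) * (((2 + (-2:ℝ)) / c - 1 / c ^ 2) / 4) := by
    apply intervalIntegral.integral_eq_sub_of_hasDerivAt
      (f := fun y : ℝ => Complex.exp (c * y) * (((2 + (y:ℂ)) / c - 1 / c ^ 2) / 4))
    · intro y _
      have h := (hexp y).mul
        (((((hid y).const_add 2).div_const c).sub_const (1 / c ^ 2)).div_const 4)
      refine HasDerivAt.congr_deriv h ?_
      field_simp
      ring
    · apply Continuous.intervalIntegrable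
      fun_prop
  have e5 : ∫ y in (0:ℝ)..2, Complex.exp (c * y) * ((2 - y) / 4 : ℂ)
      = Complex.exp (c * (2:ℝ)) * (((2 - (2:ℝ)) / c + 1 / c ^ 2) / 4)
        - Complex.exp (c * (0:ℝ)) * (((2 - (0:ℝ)) / c + 1 / c ^ 2) / 4) := by
    apply intervalIntegral.integral_eq_sub_of_hasDerivAt
      (f := fun y : ℝ => Complex.exp (c * y) * (((2 - (y:ℂ)) / c + 1 / c ^ 2) / 4))
    · intro y _
      have h := (hexp y).mul
        (((((hid y).const_sub 2).div_const c).add_const (1 / c ^ 2)).div_const 4)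
      refine HasDerivAt.congr_deriv h ?_
      field_simp
      ring
    · apply Continuous.intervalIntegrable
      fun_prop
  rw [e1, ← intervalIntegral.integral_add_adjacent_intervals
    (hcont.intervalIntegrable (-2) 0) (hcont.intervalIntegrable 0 2), e2, e3, e4, e5]
  have h1 : c * ((2:ℝ):ℂ) = 2 * c := by push_cast; ring
  have h2 : c * ((-2:ℝ):ℂ) = -2 * c := by push_cast; ring
  rw [h1, h2]
  simp only [Complex.ofReal_zero, mul_zero, Complex.exp_zero]
  push_cast
  field_simp
  ring

lemma sinc_sq_bound (x : ℝ) : sinc2pi x ^ 2 ≤ 2 * (1 + x ^ 2)⁻¹ := by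
  unfold sinc2pi
  split_ifs with h
  · simp [h]
  · have hpi := Real.pi_gt_three
    have hx : 0 < x ^ 2 := by positivity
    have h1 : Real.sin (2 * π * x) ^ 2 ≤ (2 * π * x) ^ 2 := by
      rw [sq_le_sq]; exact Real.abs_sin_le_abs
    have h2 : Real.sin (2 * π * x) ^ 2 ≤ 1 := Real.sin_sq_le_one _
    rw [div_pow, div_le_iff₀ (by positivity), ← div_eq_mul_inv, div_mul_eq_mul_div,
      le_div_iff₀ (by positivity)]
    have h3 : x ^ 2 ≤ (2 * π * x) ^ 2 := by
      have h4 : 1 ≤ (2 * π) ^ 2 := by nlinarith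
      rw [mul_pow _ x]
      nlinarith
    nlinarith [mul_le_mul_of_nonneg_right h2 hx.le]

lemma sinc_meas : Measurable sinc2pi := by
  unfold sinc2pi
  refine Measurable.ite (measurableSet_singleton 0) measurable_const (by fun_prop)

lemma sinc_int : Integrable (fun x => sinc2pi x ^ 2) := by
  refine Integrable.mono' (integrable_inv_one_add_sq.const_mul 2)
    (sinc_meas.pow_const 2).aestronglyMeasurable (ae_of_all _ fun x => ?_)
  rw [Real.norm_of_nonneg (by positivity)]
  exact sinc_sq_bound x

open FourierTransform in
lemma tent_fourier {x : ℝ} (hx : x ≠ 0) :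
    𝓕 (fun y => (tent y : ℂ)) x = ((sinc2pi x ^ 2 : ℝ) : ℂ) := by
  rw [Real.fourier_eq']
  have hpi := Real.pi_ne_zero
  set c : ℂ := ((-(2 * π * x) : ℝ) : ℂ) * Complex.I with hcdef
  have hc : c ≠ 0 := by
    rw [hcdef]; simp [hx, hpi]
  have : ∀ v : ℝ, Complex.exp (((-2 * π * inner ℝ v x : ℝ) : ℂ) * Complex.I) • (tent v : ℂ)
      = Complex.exp (c * v) * (tent v : ℂ) := by
    intro v
    rw [smul_eq_mul, hcdef]
    congr 2
    simp
    ring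
  simp only [this]
  rw [tent_exp c hc]
  have h1 : Complex.exp (2 * c) + Complex.exp (-2 * c)
      = ((2 * (1 - 2 * Real.sin (2 * π * x) ^ 2) : ℝ) : ℂ) := by
    have hh : 2 * Real.cos (2 * (2 * π * x)) = 2 * (1 - 2 * Real.sin (2 * π * x) ^ 2) := by
      rw [Real.cos_two_mul, Real.cos_sq']; ring
    rw [← hh, Complex.ofReal_mul, Complex.ofReal_cos, Complex.cos]
    rw [hcdef]
    push_cast
    rw [add_comm]
    ring_nf
  have h2 : c ^ 2 = ((-(2 * π * x) ^ 2 : ℝ) : ℂ) := by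
    rw [hcdef, mul_pow, Complex.I_sq]; push_cast; ring
  rw [h1, h2, sinc2pi, if_neg hx]
  norm_cast
  field_simp
  ring

open FourierTransform in
lemma sinc_cos (y : ℝ) :
    ∫ x : ℝ, sinc2pi x ^ 2 * Real.cos (2 * π * y * x) = tent y := by
  have hae : 𝓕 (fun y => (tent y : ℂ)) =ᵐ[volume] fun x => ((sinc2pi x ^ 2 : ℝ) : ℂ) := by
    filter_upwards [compl_mem_ae_iff.2 (measure_singleton (0:ℝ))] with x hx
    exact tent_fourier hx
  have hint : Integrable (𝓕 (fun y => (tent y : ℂ))) :=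
    (integrable_congr hae).2 sinc_int.ofReal
  have hinv := (Complex.continuous_ofReal.comp tent_cont).fourierInv_fourier_eq tent_int hint
  have h := congrFun hinv y
  rw [Real.fourierInv_eq'] at h
  have h2 : ∫ x : ℝ, Complex.exp (((2 * π * y * x : ℝ) : ℂ) * Complex.I) *
      ((sinc2pi x ^ 2 : ℝ) : ℂ) = (tent y : ℂ) := by
    refine Eq.trans ?_ h
    refine integral_congr_ae ?_
    filter_upwards [hae] with x hx
    change _ = _ • 𝓕 (fun y => (tent y : ℂ)) x
    rw [hx, smul_eq_mul]
    congr 3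
    simp
    ring
  have hi : Integrable (fun x : ℝ => Complex.exp (((2 * π * y * x : ℝ) : ℂ) * Complex.I) *
      ((sinc2pi x ^ 2 : ℝ) : ℂ)) := by
    refine sinc_int.ofReal.bdd_mul (c := 1) ?_ (ae_of_all _ fun x => ?_)
    · exact (by fun_prop : Continuous _).aestronglyMeasurable
    · rw [Complex.norm_exp_ofReal_mul_I]
  have h3 := congrArg Complex.re h2
  rw [← RCLike.re_eq_complex_re, ← integral_re hi] at h3
  simp only [RCLike.re_eq_complex_re, Complex.re_mul_ofReal, Complex.exp_ofReal_mul_I_re,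
    Complex.ofReal_re] at h3
  rw [← h3]
  congr 1; ext x; ring

lemma main_formula {n : ℕ} (a : Fin n → ℝ) :
    ∫ x : ℝ, (sinc2pi x) ^ 2 * ∏ i, (Real.cos (2 * π * a i * x)) ^ 2
      = (1 / 4 ^ n) * ∑ S : Finset (Fin n), ∑ T : Finset (Fin n),
        tent (2 * (∑ i ∈ S, a i - ∑ i ∈ T, a i)) := by
  have hi : ∀ y : ℝ, Integrable (fun x : ℝ => sinc2pi x ^ 2 * Real.cos (2 * π * y * x)) := by
    intro y
    refine sinc_int.mul_bdd (c := 1) ?_ (ae_of_all _ fun x => ?_)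
    · exact (by fun_prop : Continuous _).aestronglyMeasurable
    · exact Real.abs_cos_le_one _
  have : ∀ x : ℝ, (sinc2pi x) ^ 2 * ∏ i, (Real.cos (2 * π * a i * x)) ^ 2
      = (1 / 4 ^ n) * ∑ S : Finset (Fin n), ∑ T : Finset (Fin n),
        sinc2pi x ^ 2 * Real.cos (2 * π * (2 * (∑ i ∈ S, a i - ∑ i ∈ T, a i)) * x) := by
    intro x
    rw [prod_cos_sq (fun i => 2 * π * a i * x), mul_left_comm, Finset.mul_sum]
    simp only [Finset.mul_sum]
    refine Finset.sum_congr rfl fun S _ => Finset.sum_congr rfl fun T _ => ?_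
    rw [← Finset.sum_mul, ← Finset.sum_mul, ← Finset.mul_sum, ← Finset.mul_sum]
    congr 3
    ring
  simp only [this]
  rw [integral_const_mul, integral_finsetSum _ fun S _ => integrable_finsetSum _ fun T _ => hi _]
  congr 1
  refine Finset.sum_congr rfl fun S _ => ?_
  rw [integral_finsetSum _ fun T _ => hi _]
  exact Finset.sum_congr rfl fun T _ => sinc_cos _

lemma tent_nonneg (y : ℝ) : 0 ≤ tent y := by unfold tent; positivity

theorem stmt_0 (n : ℕ) (hn : 0 < n) (a : Fin n → ℝ) (ha : ∀ i, 0 < a i) :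
    (1 / 2 ^ (n + 1) : ℝ) ≤
      ∫ x : ℝ, (sinc2pi x) ^ 2 * ∏ i, (Real.cos (2 * π * a i * x)) ^ 2 ∧
    ((∫ x : ℝ, (sinc2pi x) ^ 2 * ∏ i, (Real.cos (2 * π * a i * x)) ^ 2)
        = 1 / 2 ^ (n + 1) ↔ SepSums a) := by
  rw [main_formula]
  set d : Finset (Fin n) → Finset (Fin n) → ℝ :=
    fun S T => tent (2 * (∑ i ∈ S, a i - ∑ i ∈ T, a i)) with hd
  set R : ℝ := ∑ S : Finset (Fin n), ∑ T ∈ Finset.univ.erase S, d S T with hR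
  have hsum : ∑ S : Finset (Fin n), ∑ T : Finset (Fin n), d S T = 2 ^ n / 2 + R := by
    have h0 : ∀ S, d S S = 1 / 2 := by
      intro S; simp [hd, tent]; norm_num
    have : ∀ S : Finset (Fin n), ∑ T : Finset (Fin n), d S T
        = 1 / 2 + ∑ T ∈ Finset.univ.erase S, d S T := by
      intro S
      rw [← h0 S, Finset.add_sum_erase _ _ (Finset.mem_univ S)]
    simp only [this]
    rw [Finset.sum_add_distrib, ← hR]
    congr 1
    simp
    ring
  have hin : ∀ S ∈ (Finset.univ : Finset (Finset (Fin n))),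
      0 ≤ ∑ T ∈ Finset.univ.erase S, d S T :=
    fun S _ => Finset.sum_nonneg fun T _ => tent_nonneg _
  have hR0 : 0 ≤ R := Finset.sum_nonneg hin
  have h4 : (1 / 4 ^ n : ℝ) * (2 ^ n / 2 + R) = 1 / 2 ^ (n + 1) + R / 4 ^ n := by
    have : (4:ℝ) ^ n = 2 ^ n * 2 ^ n := by rw [← mul_pow]; norm_num
    rw [this, pow_succ]
    field_simp
  rw [show ∑ S : Finset (Fin n), ∑ T : Finset (Fin n),
        tent (2 * (∑ i ∈ S, a i - ∑ i ∈ T, a i)) = 2 ^ n / 2 + R from hsum, h4]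
  refine ⟨by have : 0 ≤ R / 4 ^ n := by positivity
             linarith, ?_⟩
  have hiff : R = 0 ↔ SepSums a := by
    rw [hR, Finset.sum_eq_zero_iff_of_nonneg hin]
    have ht : ∀ u : ℝ, tent (2 * u) = 0 ↔ 1 ≤ |u| := by
      intro u
      have : |2 * u| = 2 * |u| := by rw [abs_mul]; norm_num
      unfold tent
      rw [this]
      constructor
      · intro h
        have := le_max_right 0 (2 - 2 * |u|)
        linarith
      · intro h
        rw [max_eq_left (by linarith)]; simp
    constructor
    · intro h S T hST
      have h1 := h S (Finset.mem_univ S)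
      rw [Finset.sum_eq_zero_iff_of_nonneg fun T _ => tent_nonneg _] at h1
      exact (ht _).1 (h1 T (Finset.mem_erase.2 ⟨hST.symm, Finset.mem_univ T⟩))
    · intro h S _
      exact Finset.sum_eq_zero fun T hT => (ht _).2 (h S T (Finset.ne_of_mem_erase hT).symm)
  rw [← hiff]
  constructor
  · intro h
    have : R / 4 ^ n = 0 := by linarith
    rcases div_eq_zero_iff.1 this with h | h
    · exact h
    · exact absurd h (by positivity)
  · intro h; rw [h]; simp
end

section
/- Let n be a positive integer and let a_1,…,a_n be positive integers. Then ∫_0^1 ∏_{i=1}^{n} cos(2π a_i x)² dx ≥ 1/2^n, with equality if and only if all subset sums are distinct, i.e. for all subsets S ≠ T of {1,…,n} one has ∑_{i∈S} a_i ≠ ∑_{i∈T} a_i. -/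
open Real MeasureTheory Finset

/-- The subset sums of the family `a` of natural numbers are all distinct. -/
def DistinctSums {n : ℕ} (a : Fin n → ℕ) : Prop :=
  ∀ S T : Finset (Fin n), S ≠ T → (∑ i ∈ S, a i) ≠ (∑ i ∈ T, a i)

lemma aux_int (s t : ℕ) :
    (∫ x in (0:ℝ)..1, Complex.exp (4 * π * Complex.I * ((s:ℂ) - t) * x)) =
      if s = t then 1 else 0 := by
  split_ifs with h
  · subst h; simp
  · have hne : (4 * π * Complex.I * ((s:ℂ) - t)) ≠ 0 := by
      have h1 : (s:ℂ) - t ≠ 0 := by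
        rw [sub_ne_zero]; exact_mod_cast h
      have h2 : (π:ℂ) ≠ 0 := by exact_mod_cast Real.pi_ne_zero
      simp [h1, h2]
    rw [integral_exp_mul_complex hne]
    have : Complex.exp (4 * π * Complex.I * ((s:ℂ) - t) * (1:ℝ)) = 1 := by
      rw [Complex.exp_eq_one_iff]
      refine ⟨2 * ((s:ℤ) - t), ?_⟩
      push_cast; ring
    rw [this]; simp

lemma aux_cos (y : ℂ) : Complex.cos y ^ 2 =
    (1 / 4) * ((1 + Complex.exp (2 * Complex.I * y)) * (1 + Complex.exp (-(2 * Complex.I * y)))) := by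
  have h1 : Complex.exp (2 * Complex.I * y) = Complex.exp (y * Complex.I) ^ 2 := by
    rw [← Complex.exp_nat_mul]; congr 1; push_cast; ring
  have h2 : Complex.exp (-(2 * Complex.I * y)) = Complex.exp (-y * Complex.I) ^ 2 := by
    rw [← Complex.exp_nat_mul]; congr 1; push_cast; ring
  have h3 : Complex.exp (y * Complex.I) * Complex.exp (-y * Complex.I) = 1 := by
    rw [← Complex.exp_add]; simp
  rw [Complex.cos, h1, h2]
  linear_combination (1 / 4) * (1 - Complex.exp (y * Complex.I) * Complex.exp (-y * Complex.I)) * h3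

lemma aux_prod {n : ℕ} (a : Fin n → ℕ) (x : ℝ) :
    ((∏ i, (Real.cos (2 * π * (a i : ℝ) * x)) ^ 2 : ℝ) : ℂ) =
      (1 / 4) ^ n * ∑ p : Finset (Fin n) × Finset (Fin n),
        Complex.exp (4 * π * Complex.I *
          (((∑ i ∈ p.1, a i : ℕ) : ℂ) - ((∑ i ∈ p.2, a i : ℕ) : ℂ)) * x) := by
  push_cast
  simp_rw [aux_cos]
  rw [Finset.prod_mul_distrib, Finset.prod_mul_distrib, Finset.prod_one_add, Finset.prod_one_add,
    Finset.sum_mul_sum, Fintype.sum_prod_type]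
  simp only [Finset.prod_const, Finset.card_univ, Fintype.card_fin, Finset.powerset_univ]
  congr 1
  refine Finset.sum_congr rfl fun S _ => Finset.sum_congr rfl fun T _ => ?_
  rw [← Complex.exp_sum, ← Complex.exp_sum, ← Complex.exp_add]
  congr 1
  rw [mul_sub, sub_mul, Finset.mul_sum, Finset.mul_sum, Finset.sum_mul, Finset.sum_mul,
    Finset.sum_neg_distrib, sub_eq_add_neg]
  congr 1
  · exact Finset.sum_congr rfl fun i _ => by ring
  · congr 1
    exact Finset.sum_congr rfl fun i _ => by ring

lemma aux_main {n : ℕ} (a : Fin n → ℕ) :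
    (∫ x in (0:ℝ)..1, ∏ i, (Real.cos (2 * π * (a i : ℝ) * x)) ^ 2) =
      (1 / 4) ^ n * ((Finset.univ.filter (fun p : Finset (Fin n) × Finset (Fin n) =>
        ∑ i ∈ p.1, a i = ∑ i ∈ p.2, a i)).card : ℝ) := by
  apply Complex.ofReal_injective
  rw [← intervalIntegral.integral_ofReal]
  simp_rw [aux_prod]
  rw [intervalIntegral.integral_const_mul, intervalIntegral.integral_finsetSum]
  · simp_rw [aux_int]
    rw [Finset.sum_boole]
    push_cast
    rfl
  · intro p _
    apply Continuous.intervalIntegrable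
    fun_prop

theorem stmt_1 (n : ℕ) (hn : 0 < n) (a : Fin n → ℕ) (ha : ∀ i, 0 < a i) :
    (1 / 2 ^ n : ℝ) ≤
      ∫ x in (0:ℝ)..1, ∏ i, (Real.cos (2 * π * (a i : ℝ) * x)) ^ 2 ∧
    ((∫ x in (0:ℝ)..1, ∏ i, (Real.cos (2 * π * (a i : ℝ) * x)) ^ 2) = 1 / 2 ^ n
      ↔ DistinctSums a) := by
  rw [aux_main]
  set P := Finset.univ.filter (fun p : Finset (Fin n) × Finset (Fin n) =>
        ∑ i ∈ p.1, a i = ∑ i ∈ p.2, a i) with hP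
  set D := (Finset.univ : Finset (Finset (Fin n))).diag with hD
  have hsub : D ⊆ P := by
    rintro ⟨S, T⟩ h
    simp only [hD, Finset.mem_diag] at h
    simp [hP, h.2]
  have hcard : D.card = 2 ^ n := by simp [hD, Finset.diag_card]
  have hpow : (1 / 2 ^ n : ℝ) = (1 / 4) ^ n * (2 ^ n : ℕ) := by
    push_cast
    rw [← mul_pow, ← one_div_pow]; norm_num
  have hpos : (0 : ℝ) < (1 / 4) ^ n := by positivity
  rw [hpow]
  refine ⟨?_, ?_⟩
  · apply mul_le_mul_of_nonneg_left _ hpos.le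
    rw [← hcard]
    exact_mod_cast Finset.card_le_card hsub
  · rw [mul_right_inj' hpos.ne', Nat.cast_inj, ← hcard]
    constructor
    · intro h S T hST hs
      have heq := Finset.eq_of_subset_of_card_le hsub h.le
      have hm : (S, T) ∈ P := by simp [hP, hs]
      rw [← heq, hD, Finset.mem_diag] at hm
      exact hST hm.2
    · intro h
      congr 1
      refine Finset.Subset.antisymm ?_ hsub
      rintro ⟨S, T⟩ hm
      simp only [hP, Finset.mem_filter] at hm
      simp only [hD, Finset.mem_diag, Finset.mem_univ, true_and]
      by_contra hne
      exact h S T hne hm.2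
end

section
/- For every ε > 0 there exists N such that for all n ≥ N and all families a : Fin n → ℝ of positive reals whose subset sums are 1-separated, the maximum element A = max_i a_i satisfies A ≥ (1 − ε) · √(2/π) · 2^n / √n. -/
open Real MeasureTheory Finset

/-- The signed sum attached to a subset. -/
noncomputable def signedSum {n : ℕ} (a : Fin n → ℝ) (S : Finset (Fin n)) : ℝ :=
  2 * ∑ i ∈ S, a i - ∑ i, a i

lemma sum_cos_signedSum {n : ℕ} (a : Fin n → ℝ) (t : ℝ) :
    ∑ S : Finset (Fin n), Real.cos (t * signedSum a S) = 2 ^ n * ∏ i, Real.cos (t * a i) := by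
  have h1 : ∏ i : Fin n, (Complex.exp ((t * a i : ℝ) * Complex.I)
      + Complex.exp (-(t * a i : ℝ) * Complex.I))
      = ∑ S : Finset (Fin n), Complex.exp ((t * signedSum a S : ℝ) * Complex.I) := by
    rw [Finset.prod_add, Finset.powerset_univ]
    refine Finset.sum_congr rfl fun S _ => ?_
    rw [← Complex.exp_sum, ← Complex.exp_sum, ← Complex.exp_add]
    congr 1
    have h2 : ∑ i, a i = ∑ i ∈ univ \ S, a i + ∑ i ∈ S, a i :=
      (Finset.sum_sdiff (Finset.subset_univ S)).symm
    rw [signedSum, h2, ← Finset.sum_mul, ← Finset.sum_mul]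
    push_cast
    rw [Finset.sum_neg_distrib, ← Finset.mul_sum, ← Finset.mul_sum]
    ring
  have h3 : ∏ i : Fin n, (Complex.exp ((t * a i : ℝ) * Complex.I)
      + Complex.exp (-(t * a i : ℝ) * Complex.I)) =
      ((2 ^ n * ∏ i, Real.cos (t * a i) : ℝ) : ℂ) := by
    have : ∀ i : Fin n, Complex.exp ((t * a i : ℝ) * Complex.I)
      + Complex.exp (-(t * a i : ℝ) * Complex.I) = 2 * ((Real.cos (t * a i) : ℝ) : ℂ) := by
      intro i
      rw [Complex.ofReal_cos, Complex.two_cos]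
    rw [Finset.prod_congr rfl fun i _ => this i, Finset.prod_mul_distrib]
    simp
  rw [h3] at h1
  have h4 := congrArg Complex.re h1
  rw [Complex.ofReal_re, Complex.re_sum] at h4
  rw [h4]
  refine Finset.sum_congr rfl fun S _ => ?_
  rw [Complex.exp_ofReal_mul_I_re]

lemma integrable_gauss_cos {c : ℝ} (hc : 0 < c) (x : ℝ) :
    Integrable (fun t : ℝ => Real.exp (-c * t ^ 2) * Real.cos (t * x)) := by
  refine (integrable_exp_neg_mul_sq hc).mul_bdd (c := 1) ?_ ?_
  · exact (by fun_prop : Continuous fun t : ℝ => Real.cos (t * x)).aestronglyMeasurable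
  · exact Filter.Eventually.of_forall fun t => by
      rw [Real.norm_eq_abs]; exact Real.abs_cos_le_one _

lemma integral_gauss_cos {c : ℝ} (hc : 0 < c) (x : ℝ) :
    ∫ t : ℝ, Real.exp (-c * t ^ 2) * Real.cos (t * x)
      = √(π / c) * Real.exp (-(1 / (4 * c)) * x ^ 2) := by
  have h := fourierIntegral_gaussian (b := (c : ℂ)) (by simpa using hc) (x : ℂ)
  have h0 : (0 : ℝ) ≤ π / c := by positivity
  have h2 : ((π : ℂ) / (c : ℂ)) ^ (1 / 2 : ℂ) * Complex.exp (-(x : ℂ) ^ 2 / (4 * c))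
     = ((√(π / c) * Real.exp (-(1 / (4 * c)) * x ^ 2) : ℝ) : ℂ) := by
    rw [Real.sqrt_eq_rpow]
    push_cast [Complex.ofReal_cpow h0]
    congr 2
    ring
  rw [h2] at h
  have hint : Integrable (fun t : ℝ => Complex.exp (Complex.I * x * t) *
      Complex.exp (-(c : ℂ) * t ^ 2)) := by
    have hg : Integrable (fun t : ℝ => ((Real.exp (-c * t ^ 2) : ℝ) : ℂ)) :=
      (integrable_exp_neg_mul_sq hc).ofReal
    refine (hg.bdd_mul (c := 1) (f := fun t : ℝ => Complex.exp (Complex.I * x * t)) ?_ ?_).congr ?_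
    · exact (by fun_prop : Continuous fun t : ℝ =>
        Complex.exp (Complex.I * x * t)).aestronglyMeasurable
    · refine Filter.Eventually.of_forall fun t => ?_
      have : Complex.I * x * t = ((x * t : ℝ) : ℂ) * Complex.I := by push_cast; ring
      rw [this, Complex.norm_exp_ofReal_mul_I]
    · exact Filter.Eventually.of_forall fun t => by push_cast; rfl
  have h3 := integral_re hint
  have h4 := congrArg Complex.re h
  rw [Complex.ofReal_re] at h4
  rw [← h4]
  change _ = RCLike.re (∫ t : ℝ, Complex.exp (Complex.I * x * t) *
      Complex.exp (-(c : ℂ) * t ^ 2))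
  rw [← h3]
  refine integral_congr_ae (Filter.Eventually.of_forall fun t => ?_)
  have e1 : Complex.I * x * t = ((t * x : ℝ) : ℂ) * Complex.I := by push_cast; ring
  have e2 : Complex.exp (-(c : ℂ) * t ^ 2) = ((Real.exp (-c * t ^ 2) : ℝ) : ℂ) := by
    push_cast; rfl
  simp only [e1, e2]
  change _ = Complex.re _
  rw [Complex.re_mul_ofReal, Complex.exp_ofReal_mul_I_re]
  ring

/-- A sum of a Gaussian over a 2-separated family is controlled by its integral. -/
lemma sum_gauss_le {ι : Type*} [Fintype ι] (x : ι → ℝ)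
    (hx : ∀ i j, i ≠ j → 2 ≤ |x i - x j|) {b : ℝ} (hb : 0 < b) :
    ∑ i, Real.exp (-b * x i ^ 2) ≤ Real.exp b * (√(π / b) / 2) := by
  have hint := integrable_exp_neg_mul_sq hb
  have key : ∀ i, 2 * Real.exp (-b * x i ^ 2) * Real.exp (-b) ≤
      ∫ y in Set.Ioc (x i - 1) (x i + 1), Real.exp (-b * y ^ 2) := by
    intro i
    have h1 : ∫ y in (x i - 1)..(x i + 1),
        Real.exp (-b * x i ^ 2) * Real.exp (-b) * (1 + 2 * b * x i * x i - 2 * b * x i * y)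
        = 2 * Real.exp (-b * x i ^ 2) * Real.exp (-b) := by
      rw [intervalIntegral.integral_const_mul, intervalIntegral.integral_sub (by simp)
        (Continuous.intervalIntegrable (by fun_prop) _ _),
        intervalIntegral.integral_const_mul, integral_id, intervalIntegral.integral_const]
      simp only [smul_eq_mul]
      ring
    rw [← h1, ← intervalIntegral.integral_of_le (by linarith)]
    refine intervalIntegral.integral_mono_on (by linarith)
      (Continuous.intervalIntegrable (by fun_prop) _ _)
      (Continuous.intervalIntegrable (by fun_prop) _ _) ?_
    intro y hy
    obtain ⟨hy1, hy2⟩ := hy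
    have h2 : 1 + 2 * b * x i * x i - 2 * b * x i * y ≤ Real.exp (-(2 * b * x i * (y - x i))) := by
      have := Real.add_one_le_exp (-(2 * b * x i * (y - x i)))
      linarith
    calc _ ≤ Real.exp (-b * x i ^ 2) * Real.exp (-b) * Real.exp (-(2 * b * x i * (y - x i))) := by
          gcongr
      _ = Real.exp (-b * x i ^ 2 + -b + -(2 * b * x i * (y - x i))) := by
          rw [Real.exp_add, Real.exp_add]
      _ ≤ _ := by
          apply Real.exp_le_exp.2
          have : (y - x i) ^ 2 ≤ 1 := by nlinarith
          nlinarith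
  have hdis : Set.Pairwise (↑(univ : Finset ι))
      (Function.onFun Disjoint fun i => Set.Ioc (x i - 1) (x i + 1)) := by
    intro i _ j _ hij
    refine Set.disjoint_left.2 fun y hy hy' => ?_
    have := hx i j hij
    obtain ⟨h1, h2⟩ := hy
    obtain ⟨h3, h4⟩ := hy'
    rcases le_abs.1 this with h | h <;> linarith
  have h5 := integral_biUnion_finset (μ := volume) (univ : Finset ι)
    (s := fun i => Set.Ioc (x i - 1) (x i + 1))
    (f := fun y => Real.exp (-b * y ^ 2)) (fun i _ => measurableSet_Ioc) hdis
    (fun i _ => hint.integrableOn)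
  have h6 := setIntegral_le_integral (μ := volume)
    (s := ⋃ i ∈ (univ : Finset ι), Set.Ioc (x i - 1) (x i + 1)) hint
    (Filter.Eventually.of_forall fun y => (Real.exp_pos _).le)
  rw [integral_gaussian, h5] at h6
  have h7 := (Finset.sum_le_sum fun i (_ : i ∈ univ) => key i).trans h6
  rw [← Finset.sum_mul, ← Finset.mul_sum, Real.exp_neg, ← div_eq_mul_inv,
    div_le_iff₀ (Real.exp_pos b)] at h7
  linarith

lemma exp_le_cos {η y : ℝ} (hη : 0 < η) (hη1 : η ≤ 1) (hy : y ^ 2 ≤ η) :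
    Real.exp (-((1 + η) / 2 * y ^ 2)) ≤ Real.cos y := by
  refine le_trans ?_ (Real.one_sub_sq_div_two_le_cos)
  have h1 := Real.add_one_le_exp ((1 + η) / 2 * y ^ 2)
  have h2 : 0 ≤ y ^ 2 := sq_nonneg y
  rw [Real.exp_neg]
  have h3 : 0 < (1 + η) / 2 * y ^ 2 + 1 := by positivity
  refine (inv_anti₀ h3 h1).trans ?_
  rw [inv_le_iff_one_le_mul₀ h3]
  nlinarith [mul_nonneg h2 (sub_nonneg.2 hy), mul_nonneg h2 (sub_nonneg.2 hη1),
    mul_nonneg (mul_nonneg h2 hη.le) (sub_nonneg.2 hη1),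
    mul_nonneg (mul_nonneg h2 hη.le) (sub_nonneg.2 hy)]

lemma prod_cos_lower {n : ℕ} (a : Fin n → ℝ) {A η K : ℝ} (hη : 0 < η) (hη1 : η ≤ 1)
    (hK : 0 ≤ K) (ha : ∀ i, 0 < a i) (haA : ∀ i, a i ≤ A) (t : ℝ) :
    Real.exp (-(n * ((1 + η) / 2) * A ^ 2 * t ^ 2))
      - 2 * Real.exp (K * (A ^ 2 * t ^ 2 - η)) ≤ ∏ i, Real.cos (t * a i) := by
  have hsq : ∀ i, (t * a i) ^ 2 ≤ A ^ 2 * t ^ 2 := fun i => by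
    have : a i ^ 2 ≤ A ^ 2 := pow_le_pow_left₀ (ha i).le (haA i) 2
    nlinarith [sq_nonneg t]
  rcases le_or_gt (A ^ 2 * t ^ 2) η with h | h
  · have h1 : ∏ i : Fin n, Real.exp (-((1 + η) / 2 * (A ^ 2 * t ^ 2))) ≤
        ∏ i, Real.cos (t * a i) := by
      refine Finset.prod_le_prod (fun i _ => (Real.exp_pos _).le) fun i _ => ?_
      refine le_trans ?_ (exp_le_cos hη hη1 ((hsq i).trans h))
      apply Real.exp_le_exp.2
      have := hsq i
      gcongr
    rw [Finset.prod_const, ← Real.exp_nat_mul, Finset.card_univ, Fintype.card_fin] at h1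
    have h2 : -(n * ((1 + η) / 2) * A ^ 2 * t ^ 2) = n * -((1 + η) / 2 * (A ^ 2 * t ^ 2)) := by
      ring
    rw [h2]
    have := Real.exp_pos (K * (A ^ 2 * t ^ 2 - η))
    linarith
  · have h1 : |∏ i, Real.cos (t * a i)| ≤ 1 := by
      rw [Finset.abs_prod]
      exact Finset.prod_le_one (fun i _ => abs_nonneg _) fun i _ => Real.abs_cos_le_one _
    have h2 := (abs_le.1 h1).1
    have h3 : 1 ≤ Real.exp (K * (A ^ 2 * t ^ 2 - η)) :=
      Real.one_le_exp (mul_nonneg hK (by linarith))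
    have h4 : Real.exp (-(n * ((1 + η) / 2) * A ^ 2 * t ^ 2)) ≤ 1 := by
      apply Real.exp_le_one_iff.2
      have : 0 ≤ n * ((1 + η) / 2) * A ^ 2 * t ^ 2 := by positivity
      linarith
    linarith

lemma main_bound {n : ℕ} (hn : 0 < n) (a : Fin n → ℝ) (ha : ∀ i, 0 < a i) (hs : SepSums a)
    {A : ℝ} (hA1 : 1 ≤ A) (haA : ∀ i, a i ≤ A) {η κ : ℝ} (hη : 0 < η) (hη1 : η ≤ 1)
    (hκ : 0 < κ) :
    2 ^ n * (√(π / (κ + n * ((1 + η) / 2))) - 2 * Real.exp (-(κ / 2 * η)) * √(π / (κ / 2)))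
      ≤ A * (π * Real.exp (1 / (4 * κ))) := by
  have hA : 0 < A := by linarith
  have hc : 0 < κ * A ^ 2 := by positivity
  set c := κ * A ^ 2 with hcdef
  have hb : 0 < 1 / (4 * c) := by positivity
  -- upper bound
  have hsep : ∀ S T : Finset (Fin n), S ≠ T → 2 ≤ |signedSum a S - signedSum a T| := by
    intro S T hST
    have := hs S T hST
    have h2 : signedSum a S - signedSum a T = 2 * (∑ i ∈ S, a i - ∑ i ∈ T, a i) := by
      unfold signedSum; ring
    rw [h2, abs_mul, abs_two]
    linarith
  have hup := sum_gauss_le (signedSum a) hsep hb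
  have heq : ∫ t : ℝ, Real.exp (-c * t ^ 2) * (2 ^ n * ∏ i, Real.cos (t * a i))
      = √(π / c) * ∑ S, Real.exp (-(1 / (4 * c)) * signedSum a S ^ 2) := by
    simp_rw [← sum_cos_signedSum, Finset.mul_sum]
    rw [integral_finsetSum _ fun S _ => integrable_gauss_cos hc _]
    exact Finset.sum_congr rfl fun S _ => integral_gauss_cos hc _
  have hintP : Integrable fun t : ℝ => Real.exp (-c * t ^ 2) * (2 ^ n * ∏ i, Real.cos (t * a i)) := by
    simp_rw [← sum_cos_signedSum, Finset.mul_sum]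
    exact integrable_finsetSum _ fun S _ => integrable_gauss_cos hc _
  have hq : 0 < (κ + n * ((1 + η) / 2)) * A ^ 2 := by positivity
  have hk2 : 0 < (κ / 2) * A ^ 2 := by positivity
  have hi1 := integrable_exp_neg_mul_sq hq
  have hi2 := integrable_exp_neg_mul_sq hk2
  have hlow : ∫ t : ℝ, (2 ^ n * (Real.exp (-((κ + n * ((1 + η) / 2)) * A ^ 2) * t ^ 2)
      - 2 * Real.exp (-(κ / 2 * η)) * Real.exp (-((κ / 2) * A ^ 2) * t ^ 2))) ≤
      ∫ t : ℝ, Real.exp (-c * t ^ 2) * (2 ^ n * ∏ i, Real.cos (t * a i)) := by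
    refine integral_mono ((hi1.sub (hi2.const_mul _)).const_mul _) hintP fun t => ?_
    have h1 := prod_cos_lower a hη hη1 (K := κ / 2) (by positivity) ha haA t
    have e1 : Real.exp (-((κ + n * ((1 + η) / 2)) * A ^ 2) * t ^ 2) =
        Real.exp (-c * t ^ 2) * Real.exp (-(n * ((1 + η) / 2) * A ^ 2 * t ^ 2)) := by
      rw [← Real.exp_add, hcdef]; congr 1; ring
    have e2 : Real.exp (-(κ / 2 * η)) * Real.exp (-((κ / 2) * A ^ 2) * t ^ 2) =
        Real.exp (-c * t ^ 2) * Real.exp (κ / 2 * (A ^ 2 * t ^ 2 - η)) := by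
      rw [← Real.exp_add, ← Real.exp_add, hcdef]; congr 1; ring
    calc _ = Real.exp (-c * t ^ 2) * (2 ^ n * (Real.exp (-(n * ((1 + η) / 2) * A ^ 2 * t ^ 2))
      - 2 * Real.exp (κ / 2 * (A ^ 2 * t ^ 2 - η)))) := by
          rw [e1, mul_assoc 2, e2]; ring
      _ ≤ _ := by
          gcongr
  rw [integral_const_mul, integral_sub hi1 (hi2.const_mul _), integral_const_mul,
    integral_gaussian, integral_gaussian, heq] at hlow
  have hsc : ∀ q : ℝ, 0 < q → √(π / (q * A ^ 2)) = √(π / q) / A := by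
    intro q hq
    rw [← div_div, Real.sqrt_div' _ (sq_nonneg A), Real.sqrt_sq hA.le]
  rw [hsc _ (by positivity), hsc _ (by positivity)] at hlow
  have h8 : √(π / c) * ∑ S, Real.exp (-(1 / (4 * c)) * signedSum a S ^ 2) ≤
      π * Real.exp (1 / (4 * κ)) := by
    calc _ ≤ √(π / c) * (Real.exp (1 / (4 * c)) * (√(π / (1 / (4 * c))) / 2)) := by gcongr
      _ = π * Real.exp (1 / (4 * c)) := by
        have : √(π / c) * √(π / (1 / (4 * c))) = 2 * π := by
          rw [← Real.sqrt_mul (by positivity)]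
          have : π / c * (π / (1 / (4 * c))) = (2 * π) ^ 2 := by field_simp; ring
          rw [this, Real.sqrt_sq (by positivity)]
        linear_combination (Real.exp (1 / (4 * c)) / 2) * this
      _ ≤ _ := by
        have : κ ≤ c := by
          rw [hcdef]; nlinarith [one_le_pow₀ hA1 (n := 2)]
        gcongr
  have h9 := hlow.trans h8
  have h10 := mul_le_mul_of_nonneg_left h9 hA.le
  refine le_trans (le_of_eq ?_) h10
  field_simp

open Filter Topology in
lemma limit_aux {η : ℝ} (hη : 0 < η) :
    Tendsto (fun n : ℕ => (√n * (√(π / (√n + n * ((1 + η) / 2)))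
      - 2 * Real.exp (-(√n / 2 * η)) * √(π / (√n / 2)))) * (Real.exp (1 / (4 * √n)))⁻¹ / π)
      atTop (𝓝 (√(π / ((1 + η) / 2)) / π)) := by
  have hs : Tendsto (fun n : ℕ => √(n : ℝ)) atTop atTop :=
    Real.tendsto_sqrt_atTop.comp tendsto_natCast_atTop_atTop
  have hF : Tendsto (fun s : ℝ => (√(π / (s⁻¹ + ((1 + η) / 2)))
      - 2 * √(2 * π) * (s ^ (1 / 2 : ℝ) * Real.exp (-(η / 2) * s))) * (Real.exp (s⁻¹ / 4))⁻¹ / π)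
      atTop (𝓝 ((√(π / (0 + ((1 + η) / 2))) - 2 * √(2 * π) * 0) * (Real.exp (0 / 4))⁻¹ / π)) := by
    have hi : Tendsto (fun s : ℝ => s⁻¹) atTop (𝓝 0) := tendsto_inv_atTop_zero
    have he := tendsto_rpow_mul_exp_neg_mul_atTop_nhds_zero (1 / 2) (η / 2) (by positivity)
    refine Tendsto.div_const (Tendsto.mul (Tendsto.sub ?_ (he.const_mul _)) ?_) _
    · refine (Real.continuous_sqrt.tendsto _).comp (Tendsto.div tendsto_const_nhds
        (hi.add tendsto_const_nhds) (by positivity))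
    · refine Tendsto.inv₀ ?_ (Real.exp_pos _).ne'
      exact (Real.continuous_exp.tendsto _).comp (hi.div_const 4)
  simp only [zero_add, mul_zero, sub_zero, zero_div, Real.exp_zero, inv_one, mul_one] at hF
  refine (hF.comp hs).congr' ?_
  filter_upwards [eventually_gt_atTop 0] with n hn
  have hn' : (0 : ℝ) < n := by exact_mod_cast hn
  have hsp : 0 < √(n : ℝ) := Real.sqrt_pos.2 hn'
  simp only [Function.comp]
  have hnn : (n : ℝ) = √(n : ℝ) ^ 2 := (Real.sq_sqrt hn'.le).symm
  generalize √(n : ℝ) = s at *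
  rw [hnn]
  have e1 : √(π / (s⁻¹ + ((1 + η) / 2))) = s * √(π / (s + s ^ 2 * ((1 + η) / 2))) := by
    have : π / (s⁻¹ + ((1 + η) / 2)) = s ^ 2 * (π / (s + s ^ 2 * ((1 + η) / 2))) := by
      field_simp
    rw [this, Real.sqrt_mul (sq_nonneg s), Real.sqrt_sq hsp.le]
  have e2 : s * √(π / (s / 2)) = √(2 * π) * s ^ (1 / 2 : ℝ) := by
    rw [← Real.sqrt_eq_rpow, ← Real.sqrt_mul (by positivity : 0 ≤ 2 * π)]
    have : 2 * π * s = s ^ 2 * (π / (s / 2)) := by field_simp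
    rw [this, Real.sqrt_mul (sq_nonneg s), Real.sqrt_sq hsp.le]
  have e3 : s⁻¹ / 4 = 1 / (4 * s) := by field_simp
  have e4 : -(s / 2 * η) = -(η / 2) * s := by ring
  rw [e1, e3, e4]
  congr 2
  linear_combination (2 * Real.exp (-(η / 2) * s)) * e2

theorem stmt_2 (ε : ℝ) (hε : 0 < ε) :
    ∃ N : ℕ, ∀ n : ℕ, N ≤ n → ∀ a : Fin n → ℝ, (∀ i, 0 < a i) →
      SepSums a → ∀ A : ℝ, IsGreatest (Set.range a) A →
      (1 - ε) * Real.sqrt (2 / π) * 2 ^ n / Real.sqrt n ≤ A := by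
  set η := min ε 1 with hηdef
  have hη : 0 < η := lt_min hε one_pos
  have hη1 : η ≤ 1 := min_le_right _ _
  have hηε : η ≤ ε := min_le_left _ _
  have hlt : (1 - ε) * √(2 / π) < √(π / ((1 + η) / 2)) / π := by
    have h1 : √(π / ((1 + η) / 2)) / π = √(2 / π) * √(1 / (1 + η)) := by
      rw [← Real.sqrt_mul (by positivity), div_eq_iff pi_pos.ne']
      have : π / ((1 + η) / 2) = (2 / π * (1 / (1 + η))) * π ^ 2 := by field_simp
      rw [this, Real.sqrt_mul (by positivity), Real.sqrt_sq pi_pos.le]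
    rw [h1, mul_comm]
    have h2 : 0 < √(2 / π) := Real.sqrt_pos.2 (by positivity)
    have h3 : 1 - ε < √(1 / (1 + η)) := by
      refine lt_of_le_of_lt (sub_le_sub_left hηε 1) (Real.lt_sqrt_of_sq_lt ?_)
      rw [lt_div_iff₀ (by positivity)]
      nlinarith [mul_pos hη hη, mul_pos (mul_pos hη hη) hη]
    gcongr
  obtain ⟨N, hN⟩ := Filter.eventually_atTop.1 ((limit_aux hη).eventually (lt_mem_nhds hlt))
  refine ⟨max N 1, fun n hn a ha hs A hA => ?_⟩
  have hn0 : 0 < n := lt_of_lt_of_le one_pos ((le_max_right _ _).trans hn)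
  have hnr : (0 : ℝ) < n := by exact_mod_cast hn0
  have hsp : 0 < √(n : ℝ) := Real.sqrt_pos.2 hnr
  have h1 := hN n ((le_max_left _ _).trans hn)
  have haA : ∀ i, a i ≤ A := fun i => hA.2 ⟨i, rfl⟩
  have hA1 : 1 ≤ A := by
    obtain ⟨i, hi⟩ := hA.1
    have := hs {i} ∅ (by simp)
    rw [Finset.sum_singleton, Finset.sum_empty, sub_zero, abs_of_pos (ha i), hi] at this
    exact this
  have h2 := main_bound hn0 a ha hs hA1 haA hη hη1 hsp
  set B := √(π / (√n + n * ((1 + η) / 2)))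
      - 2 * Real.exp (-(√n / 2 * η)) * √(π / (√n / 2)) with hB
  have hE := Real.exp_pos (1 / (4 * √(n : ℝ)))
  set E := Real.exp (1 / (4 * √(n : ℝ)))
  rw [div_le_iff₀ hsp]
  have h3 : 2 ^ n * (√n * B * E⁻¹ / π) ≤ A * √n := by
    have : 2 ^ n * (√n * B * E⁻¹ / π) = (2 ^ n * B) * (√n / (E * π)) := by
      field_simp
    rw [this]
    calc _ ≤ A * (π * E) * (√n / (E * π)) := by gcongr
      _ = A * √n := by field_simp
  refine le_trans ?_ h3
  rw [mul_comm]
  gcongr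
end

section
/- For every ε > 0 there exists N such that for all n ≥ N and all families a : Fin n → ℝ with 0 < a_i for every i, whose maximum A = max_i a_i satisfies A ≥ 2^n/n, one has ∫_{|x| ≤ 1/(4A)} (sin(2πx)/(2πx))² · ∏_{i=1}^{n} cos(2π a_i x)² dx ≥ (1 − ε) · (1/2) · (1/A) · 1/√(πn). -/
open Real MeasureTheory Finset

lemma sinc2pi_eq (x : ℝ) : sinc2pi x = Real.sinc (2 * π * x) := by
  unfold sinc2pi
  by_cases hx : x = 0
  · simp [hx]
  · rw [if_neg hx, Real.sinc_of_ne_zero (by positivity)]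

lemma wallis_lower (n : ℕ) :
    2 * π / (2 * n + 1) ≤ (∫ x in (0:ℝ)..π, sin x ^ (2 * n)) ^ 2 := by
  have h1 : (∫ x in (0:ℝ)..π, sin x ^ (2 * n)) * (∫ x in (0:ℝ)..π, sin x ^ (2 * n + 1))
      = 2 * π / (2 * n + 1) := by
    rw [integral_sin_pow_even, integral_sin_pow_odd]
    induction n with
    | zero => simp; ring
    | succ k ih =>
      rw [Finset.prod_range_succ, Finset.prod_range_succ]
      have h2 : (2 * (k:ℝ) + 1) ≠ 0 := by positivity
      have h3 : (2 * (k:ℝ) + 2) ≠ 0 := by positivity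
      have h4 : (2 * (k:ℝ) + 3) ≠ 0 := by positivity
      have h5 : 2 * ((k + 1 : ℕ):ℝ) + 1 = 2 * (k:ℝ) + 3 := by push_cast; ring
      rw [h5]
      calc _ = (π * ∏ i ∈ range k, (2 * (i:ℝ) + 1) / (2 * i + 2)) *
              (2 * ∏ i ∈ range k, (2 * (i:ℝ) + 2) / (2 * i + 3)) *
              ((2 * (k:ℝ) + 1) / (2 * k + 2) * ((2 * (k:ℝ) + 2) / (2 * k + 3))) := by ring
        _ = _ := by rw [ih]; field_simp
  rw [← h1, sq]
  apply mul_le_mul_of_nonneg_left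
  · exact integral_sin_pow_succ_le (2 * n)
  · exact (integral_sin_pow_pos (2 * n)).le

lemma cos_int (n : ℕ) (A : ℝ) (hA : 0 < A) :
    ∫ x in (-(1 / (4 * A)))..(1 / (4 * A)), cos (2 * π * A * x) ^ (2 * n)
      = (2 * π * A)⁻¹ * ∫ x in (0:ℝ)..π, sin x ^ (2 * n) := by
  have hc : 2 * π * A ≠ 0 := by positivity
  have h := intervalIntegral.integral_comp_mul_add (a := -(1 / (4 * A))) (b := 1 / (4 * A))
    (fun x => sin x ^ (2 * n)) hc (π / 2)
  simp only [sin_add_pi_div_two, smul_eq_mul] at h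
  rw [h]
  congr 2 <;> field_simp <;> ring

theorem stmt_3 (ε : ℝ) (hε : 0 < ε) :
    ∃ N : ℕ, ∀ n : ℕ, N ≤ n → ∀ a : Fin n → ℝ, (∀ i, 0 < a i) →
      ∀ A : ℝ, IsGreatest (Set.range a) A → (2 : ℝ) ^ n / n ≤ A →
      (1 - ε) * (1 / 2) * (1 / A) * (1 / Real.sqrt (π * n)) ≤
        ∫ x in {x : ℝ | |x| ≤ 1 / (4 * A)},
          (sinc2pi x) ^ 2 * ∏ i, (Real.cos (2 * π * a i * x)) ^ 2 := by
  obtain ⟨δ, hδ0, hδ1, hδε⟩ : ∃ δ : ℝ, 0 < δ ∧ δ < 1 ∧ 2 * δ ≤ ε :=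
    ⟨min (ε / 2) (1 / 2), by positivity, (min_le_right _ _).trans_lt (by norm_num),
      by linarith [min_le_left (ε / 2) (1 / 2 : ℝ)]⟩
  have hscont : Continuous sinc2pi := by
    have : sinc2pi = fun x => Real.sinc (2 * π * x) := funext sinc2pi_eq
    rw [this]
    exact Real.continuous_sinc.comp (by fun_prop)
  have hs0 : sinc2pi 0 ^ 2 = 1 := by simp [sinc2pi]
  obtain ⟨η, hη, hηs⟩ : ∃ η > 0, ∀ x : ℝ, |x| < η → 1 - δ < sinc2pi x ^ 2 := by
    have h := (hscont.pow 2).continuousAt (x := (0:ℝ))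
    have h2 := h.eventually (lt_mem_nhds (show 1 - δ < sinc2pi 0 ^ 2 by rw [hs0]; linarith))
    obtain ⟨η, hη, h3⟩ := Metric.eventually_nhds_iff.1 h2
    exact ⟨η, hη, fun x hx => h3 (by simpa [Real.dist_eq] using hx)⟩
  have ht : Filter.Tendsto (fun n : ℕ => (n:ℝ) / 2 ^ n) Filter.atTop (nhds 0) := by
    simpa using tendsto_pow_const_div_const_pow_of_one_lt 1 (one_lt_two : (1:ℝ) < 2)
  obtain ⟨N1, hN1⟩ := Filter.eventually_atTop.1 (ht.eventually (gt_mem_nhds hη))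
  obtain ⟨N2, hN2⟩ := exists_nat_gt (1 / δ)
  refine ⟨max N1 (max N2 1), fun n hn a ha A hA hAn => ?_⟩
  have hn1 : N1 ≤ n := (le_max_left _ _).trans hn
  have hn2 : N2 ≤ n := (le_max_left _ _).trans ((le_max_right _ _).trans hn)
  have hn3 : 1 ≤ n := (le_max_right _ _).trans ((le_max_right _ _).trans hn)
  have hn0 : (0:ℝ) < n := by exact_mod_cast hn3
  have hA0 : 0 < A := lt_of_lt_of_le (by positivity) hAn
  have hr : 1 / (4 * A) < η := by
    refine lt_of_le_of_lt ?_ (hN1 n hn1)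
    have h1 : 1 / A ≤ 1 / ((2:ℝ) ^ n / n) := one_div_le_one_div_of_le (by positivity) hAn
    rw [one_div_div] at h1
    refine le_trans ?_ h1
    exact one_div_le_one_div_of_le hA0 (by linarith)
  have hset : {x : ℝ | |x| ≤ 1 / (4 * A)} = Set.Icc (-(1 / (4 * A))) (1 / (4 * A)) := by
    ext x; simp [abs_le]
  have hpt : ∀ x ∈ Set.Icc (-(1 / (4 * A))) (1 / (4 * A)),
      (1 - δ) * cos (2 * π * A * x) ^ (2 * n) ≤
        (sinc2pi x) ^ 2 * ∏ i, (Real.cos (2 * π * a i * x)) ^ 2 := by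
    intro x hx
    have hx' : |x| ≤ 1 / (4 * A) := abs_le.2 hx
    have hb : 2 * π * A * |x| ≤ π / 2 := by
      calc 2 * π * A * |x| ≤ 2 * π * A * (1 / (4 * A)) := by gcongr
        _ = π / 2 := by field_simp; norm_num
    have hcosA : 0 ≤ cos (2 * π * A * |x|) :=
      cos_nonneg_of_mem_Icc ⟨by have : 0 ≤ 2 * π * A * |x| := by positivity
                                linarith [pi_pos], hb⟩
    have habs : ∀ c : ℝ, cos (2 * π * c * x) = cos (2 * π * c * |x|) := by
      intro c
      rcases abs_choice x with h | h <;> rw [h]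
      rw [mul_neg, cos_neg]
    apply mul_le_mul (hηs x (hx'.trans_lt hr)).le _ (by rw [pow_mul]; positivity) (sq_nonneg _)
    have : cos (2 * π * A * x) ^ (2 * n) = ∏ i : Fin n, cos (2 * π * A * x) ^ 2 := by
      simp [pow_mul]
    rw [this]
    apply Finset.prod_le_prod
    · intro i _; positivity
    · intro i _
      rw [habs, habs]
      have hi : a i ≤ A := hA.2 ⟨i, rfl⟩
      have h0 := ha i
      apply pow_le_pow_left₀ hcosA
      apply cos_le_cos_of_nonneg_of_le_pi
      · positivity
      · linarith [pi_pos]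
      · gcongr
  rw [hset]
  have hmono : ∫ x in Set.Icc (-(1 / (4 * A))) (1 / (4 * A)),
      (1 - δ) * cos (2 * π * A * x) ^ (2 * n) ≤
      ∫ x in Set.Icc (-(1 / (4 * A))) (1 / (4 * A)),
        (sinc2pi x) ^ 2 * ∏ i, (Real.cos (2 * π * a i * x)) ^ 2 := by
    apply setIntegral_mono_on _ _ measurableSet_Icc hpt
    · exact Continuous.integrableOn_Icc (by fun_prop)
    · exact Continuous.integrableOn_Icc (by fun_prop)
  refine le_trans ?_ hmono
  rw [integral_Icc_eq_integral_Ioc, ← intervalIntegral.integral_of_le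
    (by have : 0 < 1 / (4 * A) := by positivity
        linarith), intervalIntegral.integral_const_mul, cos_int n A hA0]
  set I := ∫ x in (0:ℝ)..π, sin x ^ (2 * n) with hI
  have hIpos : 0 < I := integral_sin_pow_pos (2 * n)
  have hIw : 2 * π / (2 * n + 1) ≤ I ^ 2 := wallis_lower n
  -- key : (1 - δ) * π / sqrt (π n) ≤ I
  have hδn : 1 ≤ δ * n := by
    have : 1 / δ < n := hN2.trans_le (by exact_mod_cast hn2)
    rw [div_lt_iff₀ hδ0] at this
    linarith
  have hs : 0 < Real.sqrt (π * n) := by positivity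
  have hss : Real.sqrt (π * n) ^ 2 = π * n := Real.sq_sqrt (by positivity)
  have key : (1 - δ) * π * (1 / Real.sqrt (π * n)) ≤ I := by
    refine abs_le_of_sq_le_sq' ?_ hIpos.le |>.2
    refine le_trans ?_ hIw
    have e : ((1 - δ) * π * (1 / Real.sqrt (π * n))) ^ 2 = (1 - δ) ^ 2 * (π / n) := by
      rw [mul_pow, mul_pow, div_pow, hss]; field_simp
    rw [e]
    have h1 : (1 - δ) ^ 2 ≤ 2 * n / (2 * n + 1) := by
      rw [le_div_iff₀ (by positivity)]
      have : (1 - δ) ^ 2 ≤ 1 - δ := by nlinarith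
      nlinarith
    calc (1 - δ) ^ 2 * (π / n) ≤ 2 * n / (2 * n + 1) * (π / n) := by gcongr
      _ = _ := by field_simp
  have hδ' : 1 - ε ≤ (1 - δ) * (1 - δ) := by nlinarith
  calc (1 - ε) * (1 / 2) * (1 / A) * (1 / Real.sqrt (π * n))
      ≤ ((1 - δ) * (1 - δ)) * (1 / 2) * (1 / A) * (1 / Real.sqrt (π * n)) := by gcongr
    _ = (1 - δ) * ((2 * π * A)⁻¹ * ((1 - δ) * π * (1 / Real.sqrt (π * n)))) := by
        field_simp
    _ ≤ (1 - δ) * ((2 * π * A)⁻¹ * I) := by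
        have : 0 ≤ 1 - δ := by linarith
        gcongr
end

section
/- For all c > 0, ε > 0 and δ > 0 there exists N such that for all n ≥ N and all families a : Fin n → ℝ of positive reals whose subset sums are 1-separated and whose maximum A = max_i a_i satisfies A² ≤ c · n^{−2/3 − ε} · ∑_{i=1}^{n} a_i², one has ∫_{|x| ≥ 1/(4A)} (sin(2πx)/(2πx))² · ∏_{i=1}^{n} cos(2π a_i x)² dx ≥ (1 − δ) · (√2 − 1)/(2√π) · (∑_{i=1}^{n} a_i²)^{−1/2}. -/
open Real MeasureTheory Finset

noncomputable def triFn (t : ℝ) : ℝ := max 0 (1 - |t| / 2) / 2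

lemma triFn_cont : Continuous triFn := by
  unfold triFn; fun_prop

lemma triFn_zero_of (t : ℝ) (ht : 2 ≤ |t|) : triFn t = 0 := by
  unfold triFn
  rw [max_eq_left (by linarith)]; simp

lemma triFn_nonneg (t : ℝ) : 0 ≤ triFn t := by
  unfold triFn; positivity

lemma triFn_integrable : Integrable triFn := by
  apply triFn_cont.integrable_of_hasCompactSupport
  apply HasCompactSupport.intro (isCompact_Icc (a := (-2:ℝ)) (b := 2))
  intro x hx
  apply triFn_zero_of
  by_contra h
  push Not at h
  rw [abs_lt] at h
  exact hx ⟨h.1.le, h.2.le⟩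

lemma tri_half1 (k : ℂ) (hk : k ≠ 0) :
    ∫ t in (0:ℝ)..2, Complex.exp (k * t) * ((1 - (t:ℂ) / 2) / 2) =
      Complex.exp (2 * k) / (4 * k ^ 2) - (1 / (2 * k) + 1 / (4 * k ^ 2)) := by
  have := intervalIntegral.integral_eq_sub_of_hasDerivAt (a := 0) (b := 2)
    (f := fun t : ℝ => Complex.exp (k * t) * ((1 - (t:ℂ) / 2) / (2 * k) + 1 / (4 * k ^ 2)))
    (f' := fun t : ℝ => Complex.exp (k * t) * ((1 - (t:ℂ) / 2) / 2)) ?_ ?_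
  · rw [this]
    simp
    rw [mul_comm k 2]
    ring
  · intro x _
    have h1 : HasDerivAt (fun t : ℝ => (t:ℂ)) 1 x := Complex.ofRealCLM.hasDerivAt
    have h2 := (h1.const_mul k).cexp
    have h3 := (((h1.div_const 2).const_sub 1).div_const (2 * k)).add_const (1 / (4 * k ^ 2))
    refine (h2.mul h3).congr_deriv ?_
    field_simp
    ring
  · apply Continuous.intervalIntegrable
    fun_prop

lemma tri_half2 (k : ℂ) (hk : k ≠ 0) :
    ∫ t in (-2:ℝ)..0, Complex.exp (k * t) * ((1 + (t:ℂ) / 2) / 2) =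
      (1 / (2 * k) - 1 / (4 * k ^ 2)) + Complex.exp (-(2 * k)) / (4 * k ^ 2) := by
  have := intervalIntegral.integral_eq_sub_of_hasDerivAt (a := -2) (b := 0)
    (f := fun t : ℝ => Complex.exp (k * t) * ((1 + (t:ℂ) / 2) / (2 * k) - 1 / (4 * k ^ 2)))
    (f' := fun t : ℝ => Complex.exp (k * t) * ((1 + (t:ℂ) / 2) / 2)) ?_ ?_
  · rw [this]
    have : k * ((-2 : ℝ) : ℂ) = -(2 * k) := by push_cast; ring
    rw [this]
    push_cast
    simp
    ring
  · intro x _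
    have h1 : HasDerivAt (fun t : ℝ => (t:ℂ)) 1 x := Complex.ofRealCLM.hasDerivAt
    have h2 := (h1.const_mul k).cexp
    have h3 := (((h1.div_const 2).const_add 1).div_const (2 * k)).sub_const (1 / (4 * k ^ 2))
    refine (h2.mul h3).congr_deriv ?_
    field_simp
    ring
  · apply Continuous.intervalIntegrable
    fun_prop

lemma tri_int (k : ℂ) (hk : k ≠ 0) :
    ∫ t : ℝ, Complex.exp (k * t) * (triFn t : ℂ) =
      (Complex.exp (2 * k) + Complex.exp (-(2 * k)) - 2) / (4 * k ^ 2) := by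
  have hc : Continuous (fun t : ℝ => Complex.exp (k * t) * (triFn t : ℂ)) := by
    have := triFn_cont
    fun_prop
  have e1 : ∫ t : ℝ, Complex.exp (k * t) * (triFn t : ℂ) =
      ∫ t in (-2:ℝ)..2, Complex.exp (k * t) * (triFn t : ℂ) := by
    rw [intervalIntegral.integral_of_le (by norm_num), setIntegral_eq_integral_of_forall_compl_eq_zero]
    intro x hx
    rw [triFn_zero_of]
    · simp
    · by_contra h
      push Not at h
      rw [abs_lt] at h
      exact hx ⟨h.1, h.2.le⟩
  rw [e1, ← intervalIntegral.integral_add_adjacent_intervals (b := 0)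
    (hc.intervalIntegrable _ _) (hc.intervalIntegrable _ _)]
  have a1 : ∫ t in (0:ℝ)..2, Complex.exp (k * t) * (triFn t : ℂ) =
    ∫ t in (0:ℝ)..2, Complex.exp (k * t) * ((1 - (t:ℂ) / 2) / 2) := by
    apply intervalIntegral.integral_congr
    intro t ht
    rw [Set.uIcc_of_le (by norm_num)] at ht
    simp only [triFn]
    rw [abs_of_nonneg ht.1, max_eq_right (by linarith [ht.2])]
    push_cast; rfl
  have a2 : ∫ t in (-2:ℝ)..0, Complex.exp (k * t) * (triFn t : ℂ) =
    ∫ t in (-2:ℝ)..0, Complex.exp (k * t) * ((1 + (t:ℂ) / 2) / 2) := by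
    apply intervalIntegral.integral_congr
    intro t ht
    rw [Set.uIcc_of_le (by norm_num)] at ht
    simp only [triFn]
    rw [abs_of_nonpos ht.2, max_eq_right (by linarith [ht.1])]
    push_cast; ring
  rw [a1, a2, tri_half1 k hk, tri_half2 k hk]
  field_simp
  ring

lemma fourier_tri (x : ℝ) (hx : x ≠ 0) :
    FourierTransform.fourier (fun t : ℝ => (triFn t : ℂ)) x = ((sinc (2 * π * x) ^ 2 : ℝ) : ℂ) := by
  rw [Real.fourier_eq']
  have hne : (2 * π * x) ≠ 0 := by positivity
  have hk : -((2 * π * x : ℝ) : ℂ) * Complex.I ≠ 0 := by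
    simp only [ne_eq, mul_eq_zero, neg_eq_zero, Complex.I_ne_zero, or_false]
    exact_mod_cast hne
  have := tri_int _ hk
  rw [show (∫ v : ℝ, Complex.exp (((-2 * π * inner ℝ v x : ℝ) : ℂ) * Complex.I) • (triFn v : ℂ)) =
    ∫ t : ℝ, Complex.exp ((-((2 * π * x : ℝ) : ℂ) * Complex.I) * t) * (triFn t : ℂ) from ?_]
  · rw [this, sinc_of_ne_zero hne]
    push_cast
    have hs : Complex.sin (2 * π * x) ^ 2 = (1 - Complex.cos (2 * (2 * π * x))) / 2 := by
      rw [Complex.cos_two_mul, Complex.cos_sq']; ring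
    rw [div_pow, hs, Complex.cos]
    have hxc : (2 * π * x : ℂ) ≠ 0 := by exact_mod_cast hne
    rw [mul_pow, Complex.I_sq]
    rw [show 2 * (-(2 * (π:ℂ) * x) * Complex.I) = -(2 * (2 * π * x)) * Complex.I by ring,
      show -(-(2 * (2 * (π:ℂ) * x)) * Complex.I) = (2 * (2 * π * x)) * Complex.I by ring]
    field_simp
    ring
  · congr 1
    ext v
    simp only [smul_eq_mul]
    congr 2
    simp
    ring

lemma sinc_sq_le (x : ℝ) : sinc x ^ 2 ≤ 2 * (1 + x ^ 2)⁻¹ := by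
  rw [← div_eq_mul_inv, le_div_iff₀ (by positivity)]
  have h1 : sinc x ^ 2 ≤ 1 := by
    rw [sq_le_one_iff_abs_le_one]; exact abs_sinc_le_one x
  have h2 : sinc x ^ 2 * x ^ 2 ≤ 1 := by
    rcases eq_or_ne x 0 with h | h
    · simp [h]
    · rw [sinc_of_ne_zero h, div_pow, div_mul_cancel₀ _ (by positivity)]
      exact sin_sq_le_one x
  linarith

lemma sincsq_integrable : Integrable (fun x : ℝ => sinc (2 * π * x) ^ 2) := by
  have h : Integrable (fun x : ℝ => sinc x ^ 2) := by
    apply (integrable_inv_one_add_sq.const_mul 2).mono'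
    · exact (continuous_sinc.pow 2).aestronglyMeasurable
    · filter_upwards with x
      rw [norm_of_nonneg (by positivity)]
      exact sinc_sq_le x
  exact h.comp_mul_left' (by positivity)

lemma sincsq_cos (t : ℝ) :
    ∫ x : ℝ, sinc (2 * π * x) ^ 2 * cos (2 * π * t * x) = triFn t := by
  have hae : (fun x : ℝ => ((sinc (2 * π * x) ^ 2 : ℝ) : ℂ)) =ᵐ[volume]
      FourierTransform.fourier (fun t : ℝ => (triFn t : ℂ)) := by
    filter_upwards [compl_mem_ae_iff.mpr (measure_singleton (μ := volume) (0:ℝ))] with x hx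
    exact (fourier_tri x hx).symm
  have hi : Integrable (FourierTransform.fourier (fun t : ℝ => (triFn t : ℂ))) :=
    sincsq_integrable.ofReal.congr hae
  have hc : Continuous (fun t : ℝ => (triFn t : ℂ)) := by
    have := triFn_cont
    fun_prop
  have key := congrFun (hc.fourierInv_fourier_eq triFn_integrable.ofReal hi) t
  rw [Real.fourierInv_eq'] at key
  have e : ∫ v : ℝ, Complex.exp (((2 * π * inner ℝ v t : ℝ) : ℂ) * Complex.I) •
      FourierTransform.fourier (fun t : ℝ => (triFn t : ℂ)) v =
      ∫ v : ℝ, Complex.exp (((2 * π * t * v : ℝ) : ℂ) * Complex.I) * ((sinc (2 * π * v) ^ 2 : ℝ) : ℂ) := by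
    apply integral_congr_ae
    filter_upwards [hae] with x hx
    rw [← hx, smul_eq_mul]
    congr 3
    simp
    ring
  rw [e] at key
  have hint : Integrable (fun v : ℝ => Complex.exp (((2 * π * t * v : ℝ) : ℂ) * Complex.I) * ((sinc (2 * π * v) ^ 2 : ℝ) : ℂ)) := by
    apply (sincsq_integrable.ofReal (𝕜 := ℂ)).bdd_mul (c := 1)
    · apply Continuous.aestronglyMeasurable
      fun_prop
    · filter_upwards with v
      rw [Complex.norm_exp_ofReal_mul_I]
  have := congrArg Complex.re key
  rw [← RCLike.re_eq_complex_re, ← integral_re hint] at this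
  simp only [RCLike.re_eq_complex_re, Complex.ofReal_re] at this
  rw [← this]
  congr 1
  ext x
  rw [Complex.re_mul_ofReal, Complex.exp_ofReal_mul_I_re, mul_comm]

lemma J_integrable {ι : Type*} (a : ι → ℝ) (s : Finset ι) (t : ℝ) :
    Integrable (fun x : ℝ => sinc (2 * π * x) ^ 2 *
      (cos (2 * π * t * x) * ∏ i ∈ s, cos (2 * π * a i * x) ^ 2)) := by
  apply sincsq_integrable.mul_bdd (c := 1)
  · apply Continuous.aestronglyMeasurable
    fun_prop
  · filter_upwards with x
    rw [norm_mul, norm_prod]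
    apply mul_le_one₀ (abs_cos_le_one _) (by positivity)
    apply Finset.prod_le_one
    · intros; positivity
    · intro i _
      rw [norm_of_nonneg (by positivity)]
      exact cos_sq_le_one _

lemma J_bound {ι : Type*} [DecidableEq ι] (a : ι → ℝ) (s : Finset ι) :
    (∀ t : ℝ, 0 ≤ ∫ x : ℝ, sinc (2 * π * x) ^ 2 *
      (cos (2 * π * t * x) * ∏ i ∈ s, cos (2 * π * a i * x) ^ 2)) ∧
    (1 / 2) ^ s.card / 2 ≤ ∫ x : ℝ, sinc (2 * π * x) ^ 2 *
      (cos (2 * π * 0 * x) * ∏ i ∈ s, cos (2 * π * a i * x) ^ 2) := by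
  induction s using Finset.induction_on with
  | empty =>
    simp only [Finset.prod_empty, mul_one, sincsq_cos]
    refine ⟨triFn_nonneg, ?_⟩
    simp [triFn]
  | insert j s hj ih =>
    have step : ∀ t : ℝ, ∫ x : ℝ, sinc (2 * π * x) ^ 2 *
      (cos (2 * π * t * x) * ∏ i ∈ insert j s, cos (2 * π * a i * x) ^ 2) =
      (1/2) * (∫ x : ℝ, sinc (2 * π * x) ^ 2 *
        (cos (2 * π * t * x) * ∏ i ∈ s, cos (2 * π * a i * x) ^ 2)) +
      ((1/4) * (∫ x : ℝ, sinc (2 * π * x) ^ 2 *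
        (cos (2 * π * (t + 2 * a j) * x) * ∏ i ∈ s, cos (2 * π * a i * x) ^ 2)) +
      (1/4) * (∫ x : ℝ, sinc (2 * π * x) ^ 2 *
        (cos (2 * π * (t - 2 * a j) * x) * ∏ i ∈ s, cos (2 * π * a i * x) ^ 2))) := by
      intro t
      have I := J_integrable a s
      simp only [← integral_const_mul]
      rw [← integral_add ((I _).const_mul _) ((I _).const_mul _), ← integral_add ((I _).const_mul _)]
      · congr 1
        ext x
        rw [Finset.prod_insert hj]
        rw [show 2 * π * (t + 2 * a j) * x = 2 * π * t * x + 2 * (2 * π * a j * x) by ring,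
          show 2 * π * (t - 2 * a j) * x = 2 * π * t * x - 2 * (2 * π * a j * x) by ring,
          cos_add, cos_sub, cos_two_mul]
        ring
      · exact ((I _).const_mul _).add ((I _).const_mul _)
    obtain ⟨h1, h2⟩ := ih
    constructor
    · intro t
      rw [step]
      have := h1 t
      have := h1 (t + 2 * a j)
      have := h1 (t - 2 * a j)
      linarith
    · rw [step, Finset.card_insert_of_notMem hj, pow_succ]
      have := h1 (0 + 2 * a j)
      have := h1 (0 - 2 * a j)
      linarith

lemma total_lower {n : ℕ} (a : Fin n → ℝ) :
    (1 / 2) ^ n / 2 ≤ ∫ x : ℝ, sinc (2 * π * x) ^ 2 * ∏ i, cos (2 * π * a i * x) ^ 2 := by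
  have := (J_bound a Finset.univ).2
  simpa using this

lemma total_integrable {n : ℕ} (a : Fin n → ℝ) :
    Integrable (fun x : ℝ => sinc (2 * π * x) ^ 2 * ∏ i, cos (2 * π * a i * x) ^ 2) := by
  have := J_integrable a Finset.univ 0
  simpa using this

lemma cos_prod_expand {ι : Type*} [DecidableEq ι] (θ : ι → ℝ) (s : Finset ι) : ∀ φ : ℝ,
    cos φ * ∏ i ∈ s, cos (θ i) =
      (1 / 2) ^ s.card * ∑ S ∈ s.powerset, cos (φ + (2 * ∑ i ∈ S, θ i - ∑ i ∈ s, θ i)) := by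
  induction s using Finset.induction_on with
  | empty => intro φ; simp
  | insert j s hj ih =>
    intro φ
    rw [Finset.prod_insert hj, Finset.sum_powerset_insert hj, Finset.card_insert_of_notMem hj,
      Finset.sum_insert hj]
    have e1 : ∑ S ∈ s.powerset, cos (φ + (2 * ∑ i ∈ S, θ i - (θ j + ∑ i ∈ s, θ i))) =
      ∑ S ∈ s.powerset, cos ((φ - θ j) + (2 * ∑ i ∈ S, θ i - ∑ i ∈ s, θ i)) := by
      apply Finset.sum_congr rfl
      intro S _; congr 1; ring
    have e2 : ∑ S ∈ s.powerset, cos (φ + (2 * ∑ i ∈ insert j S, θ i - (θ j + ∑ i ∈ s, θ i))) =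
      ∑ S ∈ s.powerset, cos ((φ + θ j) + (2 * ∑ i ∈ S, θ i - ∑ i ∈ s, θ i)) := by
      apply Finset.sum_congr rfl
      intro S hS
      have : j ∉ S := fun h => hj (Finset.mem_powerset.mp hS h)
      rw [Finset.sum_insert this]
      congr 1; ring
    rw [e1, e2, pow_succ, mul_add]
    have := ih (φ - θ j)
    have := ih (φ + θ j)
    rw [cos_sub] at *
    rw [cos_add] at this
    linarith

lemma gauss_cos (b v : ℝ) (hb : 0 < b) :
    ∫ x : ℝ, cos (2 * π * v * x) * exp (-b * x ^ 2) = √(π / b) * exp (-(π ^ 2 / b) * v ^ 2) := by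
  have h := fourierIntegral_gaussian (b := (b:ℂ)) (by simpa using hb) ((2 * π * v : ℝ) : ℂ)
  have hint : Integrable (fun x : ℝ => Complex.exp (Complex.I * ((2 * π * v : ℝ) : ℂ) * x) *
      Complex.exp (-b * (x:ℂ) ^ 2)) := by
    have h2 : Integrable (fun x : ℝ => Complex.exp (-b * (x:ℂ) ^ 2)) := by
      have := (integrable_exp_neg_mul_sq hb).ofReal (𝕜 := ℂ)
      refine this.congr ?_
      filter_upwards with x
      simp
    apply h2.bdd_mul (c := 1)
    · apply Continuous.aestronglyMeasurable
      fun_prop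
    · filter_upwards with x
      rw [show Complex.I * ((2 * π * v : ℝ) : ℂ) * x = ((2 * π * v * x : ℝ) : ℂ) * Complex.I by push_cast; ring,
        Complex.norm_exp_ofReal_mul_I]
  have := congrArg Complex.re h
  rw [← RCLike.re_eq_complex_re, ← integral_re hint] at this
  simp only [RCLike.re_eq_complex_re] at this
  have e : ((π:ℂ) / b) ^ (1 / 2 : ℂ) * Complex.exp (-((2 * π * v : ℝ) : ℂ) ^ 2 / (4 * b)) =
      ((√(π / b) * exp (-(π ^ 2 / b) * v ^ 2) : ℝ) : ℂ) := by
    rw [sqrt_eq_rpow]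
    push_cast
    rw [Complex.ofReal_cpow (by positivity)]
    push_cast
    congr 2
    field_simp
    ring
  rw [e, Complex.ofReal_re] at this
  rw [← this]
  congr 1
  ext x
  rw [show Complex.I * ((2 * π * v : ℝ) : ℂ) * x = ((2 * π * v * x : ℝ) : ℂ) * Complex.I by push_cast; ring,
    show Complex.exp (-b * (x:ℂ) ^ 2) = ((exp (-b * x ^ 2) : ℝ) : ℂ) by push_cast; rfl,
    Complex.re_mul_ofReal, Complex.exp_ofReal_mul_I_re]

lemma sinc_cos_eq (t x : ℝ) :
    sinc (2 * π * x) * cos (2 * π * t * x) = (1 / 2) * ∫ v in (t - 1)..(t + 1), cos (2 * π * v * x) := by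
  rcases eq_or_ne x 0 with h | h
  · subst h; simp; norm_num
  · have hne : (2 * π * x) ≠ 0 := by positivity
    have : ∀ v : ℝ, cos (2 * π * v * x) = cos ((2 * π * x) * v) := by intro v; congr 1; ring
    simp only [this]
    rw [intervalIntegral.integral_comp_mul_left _ hne, integral_cos, sinc_of_ne_zero hne, smul_eq_mul,
      show 2 * π * x * (t + 1) = 2 * π * t * x + 2 * π * x by ring,
      show 2 * π * x * (t - 1) = 2 * π * t * x - 2 * π * x by ring, sin_add, sin_sub]
    field_simp
    ring

lemma sinc_gauss (b t : ℝ) (hb : 0 < b) :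
    ∫ x : ℝ, sinc (2 * π * x) * cos (2 * π * t * x) * exp (-b * x ^ 2) =
     (1 / 2) * ∫ v in Set.Ioc (t - 1) (t + 1), √(π / b) * exp (-(π ^ 2 / b) * v ^ 2) := by
  simp only [← gauss_cos b _ hb, sinc_cos_eq]
  rw [← integral_integral_swap]
  · rw [← integral_const_mul]
    congr 1
    ext x
    rw [integral_mul_const, intervalIntegral.integral_of_le (by linarith)]
    ring
  · have h1 : Integrable (fun p : ℝ × ℝ => (1:ℝ) * exp (-b * p.1 ^ 2))
        ((volume : Measure ℝ).prod ((volume : Measure ℝ).restrict (Set.Ioc (t - 1) (t + 1)))) := by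
      have := (integrable_exp_neg_mul_sq hb).mul_prod (integrable_const (1:ℝ)
        (μ := (volume : Measure ℝ).restrict (Set.Ioc (t - 1) (t + 1))))
      simpa using this
    apply h1.mono'
    · apply Continuous.aestronglyMeasurable
      simp only [Function.uncurry_def]
      fun_prop
    · filter_upwards with p
      simp only [Function.uncurry]
      rw [norm_mul, norm_of_nonneg (exp_pos _).le]
      gcongr
      exact abs_cos_le_one _

lemma M_lower {n : ℕ} (a : Fin n → ℝ) (ha : SepSums a) (b : ℝ) (hb : 0 < b) :
    ∫ x : ℝ, (sinc (2 * π * x) * ∏ i, cos (2 * π * a i * x)) * exp (-b * x ^ 2) ≤ (1 / 2) ^ n / 2 := by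
  set t : Finset (Fin n) → ℝ := fun S => 2 * ∑ i ∈ S, a i - ∑ i, a i with ht
  have e : ∀ x : ℝ, (sinc (2 * π * x) * ∏ i, cos (2 * π * a i * x)) * exp (-b * x ^ 2) =
      (1 / 2) ^ n * ∑ S : Finset (Fin n), sinc (2 * π * x) * cos (2 * π * t S * x) * exp (-b * x ^ 2) := by
    intro x
    have := cos_prod_expand (fun i => 2 * π * a i * x) Finset.univ 0
    simp only [cos_zero, one_mul, zero_add, Finset.card_univ, Fintype.card_fin, Finset.powerset_univ] at this
    have h' : ∀ S : Finset (Fin n), 2 * ∑ i ∈ S, 2 * π * a i * x - ∑ i, 2 * π * a i * x = 2 * π * t S * x := by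
      intro S
      simp only [ht, ← Finset.sum_mul, ← Finset.mul_sum]
      ring
    simp only [h'] at this
    rw [this, ← Finset.sum_mul, ← Finset.mul_sum]
    ring
  have hI : ∀ S : Finset (Fin n), Integrable (fun x : ℝ => sinc (2 * π * x) * cos (2 * π * t S * x) * exp (-b * x ^ 2)) := by
    intro S
    apply (integrable_exp_neg_mul_sq hb).bdd_mul (c := 1)
    · apply Continuous.aestronglyMeasurable
      have := continuous_sinc
      fun_prop
    · filter_upwards with x
      rw [norm_mul]
      exact mul_le_one₀ (abs_sinc_le_one _) (by positivity) (abs_cos_le_one _)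
  simp only [e]
  rw [integral_const_mul, integral_finsetSum _ (fun S _ => hI S)]
  simp only [sinc_gauss b _ hb]
  rw [← Finset.mul_sum]
  set g : ℝ → ℝ := fun v => √(π / b) * exp (-(π ^ 2 / b) * v ^ 2) with hg
  have gint : Integrable g := (integrable_exp_neg_mul_sq (by positivity)).const_mul _
  have gtot : ∫ v, g v = 1 := by
    rw [hg, integral_const_mul, integral_gaussian, ← sqrt_mul (by positivity)]
    rw [show π / b * (π / (π ^ 2 / b)) = 1 by field_simp]
    simp
  have hs : ∑ S : Finset (Fin n), ∫ v in Set.Ioc (t S - 1) (t S + 1), g v ≤ 1 := by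
    rw [← integral_biUnion_finset]
    · rw [← gtot]
      apply setIntegral_le_integral gint
      filter_upwards with v
      simp only [hg, Pi.zero_apply]; positivity
    · intros; exact measurableSet_Ioc
    · intro S _ T _ hST
      have := ha S T hST
      rw [Function.onFun, Set.disjoint_left]
      rintro v ⟨h1, h2⟩ ⟨h3, h4⟩
      simp only [ht] at h1 h2 h3 h4
      rcases le_abs.mp this with h | h <;> linarith
    · intros; exact gint.integrableOn
  have : (0:ℝ) < (1/2)^n := by positivity
  nlinarith

lemma cos_le_gauss (θ : ℝ) (h : |θ| ≤ π / 2) : cos θ ^ 2 ≤ exp (-θ ^ 2) := by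
  have hanti : AntitoneOn (fun x : ℝ => cos x * exp (x ^ 2 / 2)) (Set.Icc 0 (π / 2)) := by
    apply antitoneOn_of_deriv_nonpos (convex_Icc _ _)
    · fun_prop
    · fun_prop
    · intro x hx
      rw [interior_Icc] at hx
      have hd : HasDerivAt (fun x : ℝ => cos x * exp (x ^ 2 / 2))
          (-sin x * exp (x ^ 2 / 2) + cos x * (exp (x ^ 2 / 2) * x)) x := by
        have h1 := ((hasDerivAt_pow 2 x).div_const 2).exp
        refine ((hasDerivAt_cos x).mul h1).congr_deriv ?_
        simp
      rw [hd.deriv]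
      have hcos : 0 < cos x := cos_pos_of_mem_Ioo ⟨by linarith [hx.1, pi_pos], hx.2⟩
      have ht := lt_tan hx.1 hx.2
      rw [tan_eq_sin_div_cos, lt_div_iff₀ hcos] at ht
      have := exp_pos (x ^ 2 / 2)
      nlinarith
  have h0 := hanti (a := 0) (b := |θ|) ⟨le_rfl, by positivity⟩ ⟨abs_nonneg _, h⟩ (abs_nonneg _)
  simp only [cos_abs, sq_abs] at h0
  simp at h0
  have hc : 0 ≤ cos θ := cos_nonneg_of_neg_pi_div_two_le_of_le (abs_le.mp h).1 (abs_le.mp h).2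
  have h1 : cos θ ≤ exp (-(θ ^ 2 / 2)) := by
    rw [exp_neg, ← one_div, le_div_iff₀ (exp_pos _)]; exact h0
  calc cos θ ^ 2 ≤ exp (-(θ ^ 2 / 2)) ^ 2 := by gcongr
    _ = exp (-θ ^ 2) := by rw [← exp_nat_mul]; congr 1; push_cast; ring

lemma central {n : ℕ} (a : Fin n → ℝ) (ha : ∀ i, 0 < a i) (A : ℝ) (hA : 0 < A) (hAa : ∀ i, a i ≤ A)
    (σ : ℝ) (hσ : 0 < σ) (hs : ∑ i, a i ^ 2 = σ ^ 2) :
    ∫ x in {x : ℝ | 1 / (4 * A) ≤ |x|}ᶜ, sinc (2 * π * x) ^ 2 * ∏ i, cos (2 * π * a i * x) ^ 2 ≤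
      1 / (2 * √π) * σ⁻¹ := by
  have hb : 0 < 4 * π ^ 2 * σ ^ 2 := by positivity
  have hgi := integrable_exp_neg_mul_sq hb
  have hm : MeasurableSet {x : ℝ | 1 / (4 * A) ≤ |x|}ᶜ :=
    (measurableSet_le measurable_const (by fun_prop)).compl
  calc _ ≤ ∫ x in {x : ℝ | 1 / (4 * A) ≤ |x|}ᶜ, exp (-(4 * π ^ 2 * σ ^ 2) * x ^ 2) := by
        apply integral_mono_of_nonneg
        · filter_upwards with x
          have : 0 ≤ ∏ i, cos (2 * π * a i * x) ^ 2 := Finset.prod_nonneg (fun i _ => by positivity)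
          simp only [Pi.zero_apply]
          positivity
        · exact hgi.integrableOn
        · filter_upwards [ae_restrict_mem hm] with x hx
          simp only [Set.mem_compl_iff, Set.mem_ofPred_eq, not_le] at hx
          have h1 : ∏ i, cos (2 * π * a i * x) ^ 2 ≤ ∏ i, exp (-(2 * π * a i * x) ^ 2) := by
            apply Finset.prod_le_prod
            · intros; positivity
            · intro i _
              apply cos_le_gauss
              rw [abs_mul, abs_of_pos (by have := ha i; positivity : 0 < 2 * π * a i)]
              rw [lt_div_iff₀ (by positivity)] at hx
              have : a i * |x| ≤ A * |x| := by gcongr; exact hAa i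
              have := pi_pos
              nlinarith
          rw [← exp_sum] at h1
          have h2 : ∑ i, -(2 * π * a i * x) ^ 2 = -(4 * π ^ 2 * σ ^ 2) * x ^ 2 := by
            rw [← hs, Finset.mul_sum, ← Finset.sum_neg_distrib, Finset.sum_mul]
            apply Finset.sum_congr rfl
            intros; ring
          rw [h2] at h1
          have h3 : sinc (2 * π * x) ^ 2 ≤ 1 := by
            rw [sq_le_one_iff_abs_le_one]; exact abs_sinc_le_one _
          have h4 := exp_pos (-(4 * π ^ 2 * σ ^ 2) * x ^ 2)
          have : 0 ≤ ∏ i, cos (2 * π * a i * x) ^ 2 := Finset.prod_nonneg (fun i _ => by positivity)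
          nlinarith
    _ ≤ ∫ x, exp (-(4 * π ^ 2 * σ ^ 2) * x ^ 2) := by
        apply setIntegral_le_integral hgi
        filter_upwards with x
        simp only [Pi.zero_apply]; positivity
    _ = _ := by
        rw [integral_gaussian, show π / (4 * π ^ 2 * σ ^ 2) = (1 / (2 * √π) * σ⁻¹) ^ 2 from ?_,
          sqrt_sq (by positivity)]
        rw [mul_pow, div_pow, mul_pow, sq_sqrt pi_pos.le]
        field_simp
        norm_num

lemma prod_diff {ι : Type*} [DecidableEq ι] (s : Finset ι) (f g : ι → ℝ) (hf : ∀ i, |f i| ≤ 1) (hg : ∀ i, |g i| ≤ 1) :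
    |∏ i ∈ s, f i - ∏ i ∈ s, g i| ≤ ∑ i ∈ s, |f i - g i| := by
  induction s using Finset.induction_on with
  | empty => simp
  | insert j s hj ih =>
    rw [Finset.prod_insert hj, Finset.prod_insert hj, Finset.sum_insert hj]
    have hP : |∏ i ∈ s, f i| ≤ 1 := by
      rw [Finset.abs_prod]
      exact Finset.prod_le_one (fun i _ => abs_nonneg _) (fun i _ => hf i)
    calc |f j * ∏ i ∈ s, f i - g j * ∏ i ∈ s, g i|
        = |(f j - g j) * ∏ i ∈ s, f i + g j * (∏ i ∈ s, f i - ∏ i ∈ s, g i)| := by congr 1; ring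
      _ ≤ |f j - g j| * |∏ i ∈ s, f i| + |g j| * |∏ i ∈ s, f i - ∏ i ∈ s, g i| := by
          rw [← abs_mul, ← abs_mul]; exact abs_add_le _ _
      _ ≤ |f j - g j| * 1 + 1 * ∑ i ∈ s, |f i - g i| := by
          gcongr
          exact hg j
      _ = _ := by ring

lemma cos_gauss_diff (θ : ℝ) (h : |θ| ≤ 1) : |cos θ - exp (-(θ ^ 2 / 2))| ≤ θ ^ 4 := by
  have h1 := cos_bound h
  have hsq : θ ^ 2 ≤ 1 := by rwa [sq_le_one_iff_abs_le_one]
  have h2 := abs_exp_sub_one_sub_id_le (x := -(θ ^ 2 / 2)) (by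
    rw [abs_neg, abs_of_nonneg (by positivity)]; linarith)
  have h4 : |θ| ^ 4 = θ ^ 4 := by rw [show 4 = 2 * 2 by norm_num, pow_mul, sq_abs, pow_mul]
  rw [h4] at h1
  have h5 : 0 ≤ θ ^ 4 := by positivity
  rw [abs_le] at *
  constructor <;> nlinarith

lemma prod_clt {n : ℕ} (b : Fin n → ℝ) (hs : ∑ i, b i ^ 2 = 1) (ρ z : ℝ) (hb : ∀ i, |b i| ≤ ρ)
    (hz : |z| * ρ ≤ 1) : |∏ i, cos (z * b i) - exp (-(z ^ 2 / 2))| ≤ z ^ 4 * ρ ^ 2 := by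
  have e : exp (-(z ^ 2 / 2)) = ∏ i, exp (-((z * b i) ^ 2 / 2)) := by
    rw [← exp_sum]
    congr 1
    rw [Finset.sum_neg_distrib, ← Finset.sum_div]
    simp only [mul_pow]
    rw [← Finset.mul_sum, hs, mul_one]
  rw [e]
  calc _ ≤ ∑ i, |cos (z * b i) - exp (-((z * b i) ^ 2 / 2))| := by
        apply prod_diff
        · intro i; exact abs_cos_le_one _
        · intro i
          rw [abs_of_pos (exp_pos _), exp_le_one_iff]
          have : 0 ≤ (z * b i) ^ 2 := by positivity
          linarith
    _ ≤ ∑ i, z ^ 4 * ρ ^ 2 * b i ^ 2 := by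
        apply Finset.sum_le_sum
        intro i _
        refine (cos_gauss_diff _ ?_).trans ?_
        · rw [abs_mul]
          exact (mul_le_mul_of_nonneg_left (hb i) (abs_nonneg _)).trans hz
        · have : b i ^ 2 ≤ ρ ^ 2 := by rw [← sq_abs]; gcongr; exact hb i
          calc (z * b i) ^ 4 = z ^ 4 * b i ^ 2 * b i ^ 2 := by ring
            _ ≤ _ := by gcongr
    _ = _ := by rw [← Finset.mul_sum, hs, mul_one]

open Filter Topology in
lemma clt_limit (β η : ℝ) (hβ : 0 < β) (hη : 0 < η) :
    ∃ ρ > 0, ∀ (n : ℕ) (a : Fin n → ℝ) (σ : ℝ), 0 < σ → ∑ i, a i ^ 2 = σ ^ 2 →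
      (∀ i, |a i| ≤ ρ * σ) → 1 ≤ ρ * σ →
      √(π / (2 * π ^ 2 + β)) - η ≤
        σ * ∫ x : ℝ, (sinc (2 * π * x) * ∏ i, cos (2 * π * a i * x)) * exp (-(β * σ ^ 2) * x ^ 2) := by
  by_contra hcon
  push Not at hcon
  have hpos : ∀ k : ℕ, (0:ℝ) < 1 / ((k:ℝ) + 1) := fun k => by positivity
  choose n a σ hσ hs ha h1 hlt using fun k : ℕ => hcon (1 / ((k:ℝ) + 1)) (hpos k)
  set ρ : ℕ → ℝ := fun k => 1 / ((k:ℝ) + 1) with hρ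
  have hρ0 : Tendsto ρ atTop (𝓝 0) := tendsto_one_div_add_atTop_nhds_zero_nat
  set g : ℕ → ℝ → ℝ := fun k y => (sinc (2 * π * y * (σ k)⁻¹) * ∏ i, cos (2 * π * y * (a k i / σ k))) *
    exp (-β * y ^ 2) with hg
  have hscale : ∀ k, σ k * ∫ x : ℝ, (sinc (2 * π * x) * ∏ i, cos (2 * π * a k i * x)) * exp (-(β * σ k ^ 2) * x ^ 2) =
      ∫ y, g k y := by
    intro k
    have hk := (hσ k).ne'
    have h := Measure.integral_comp_mul_left (g k) (σ k)
    have e : ∀ x, g k (σ k * x) = (sinc (2 * π * x) * ∏ i, cos (2 * π * a k i * x)) * exp (-(β * σ k ^ 2) * x ^ 2) := by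
      intro x
      simp only [hg]
      congr 1
      · congr 1
        · congr 1; field_simp
        · apply Finset.prod_congr rfl
          intro i _; congr 1; field_simp
      · congr 1; ring
    simp only [e] at h
    rw [h, abs_of_pos (inv_pos.mpr (hσ k)), smul_eq_mul, mul_inv_cancel_left₀ hk]
  have hσi : Tendsto (fun k => (σ k)⁻¹) atTop (𝓝 0) := by
    apply squeeze_zero (fun k => (inv_pos.mpr (hσ k)).le) (fun k => ?_) hρ0
    rw [inv_le_iff_one_le_mul₀ (hσ k)]
    exact h1 k
  have hlim : Tendsto (fun k => ∫ y, g k y) atTop (𝓝 (∫ y, exp (-(2 * π ^ 2 + β) * y ^ 2))) := by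
    apply tendsto_integral_of_dominated_convergence (fun y => exp (-β * y ^ 2))
    · intro k
      apply Continuous.aestronglyMeasurable
      have := continuous_sinc
      fun_prop
    · exact integrable_exp_neg_mul_sq hβ
    · intro k
      filter_upwards with y
      simp only [hg]
      rw [norm_mul, norm_mul, norm_of_nonneg (exp_pos _).le]
      refine mul_le_of_le_one_left (exp_pos _).le ?_
      refine mul_le_one₀ (abs_sinc_le_one _) (by positivity) ?_
      rw [norm_prod]
      exact Finset.prod_le_one (fun i _ => by positivity) (fun i _ => abs_cos_le_one _)
    · filter_upwards with y
      have hprod : Tendsto (fun k => ∏ i, cos (2 * π * y * (a k i / σ k))) atTop (𝓝 (exp (-((2 * π * y) ^ 2 / 2)))) := by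
        rw [tendsto_iff_norm_sub_tendsto_zero]
        have hz : ∀ᶠ k in atTop, |2 * π * y| * ρ k ≤ 1 := by
          have : Tendsto (fun k => |2 * π * y| * ρ k) atTop (𝓝 0) := by
            simpa using hρ0.const_mul |2 * π * y|
          exact this.eventually_le_const one_pos
        have hb : Tendsto (fun k => (2 * π * y) ^ 4 * ρ k ^ 2) atTop (𝓝 0) := by
          simpa using (hρ0.pow 2).const_mul ((2 * π * y) ^ 4)
        apply squeeze_zero' (Eventually.of_forall fun k => norm_nonneg _) _ hb
        filter_upwards [hz] with k hk
        apply prod_clt _ _ _ _ _ hk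
        · simp only [div_pow]
          rw [← Finset.sum_div, hs, div_self]
          have := hσ k
          positivity
        · intro i
          rw [abs_div, abs_of_pos (hσ k), div_le_iff₀ (hσ k)]
          exact ha k i
      have hsinc : Tendsto (fun k => sinc (2 * π * y * (σ k)⁻¹)) atTop (𝓝 1) := by
        have h0 : Tendsto (fun k => 2 * π * y * (σ k)⁻¹) atTop (𝓝 0) := by
          simpa using hσi.const_mul (2 * π * y)
        have := (continuous_sinc.tendsto 0).comp h0
        rw [sinc_zero] at this
        exact this
      have := (hsinc.mul hprod).mul_const (exp (-β * y ^ 2))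
      convert this using 2
      rw [one_mul, ← exp_add]
      congr 1; ring
  rw [integral_gaussian] at hlim
  have hev : ∀ᶠ k in atTop, √(π / (2 * π ^ 2 + β)) - η < ∫ y, g k y :=
    hlim.eventually_const_lt (by linarith)
  obtain ⟨k, hk⟩ := hev.exists
  have := hlt k
  rw [hscale k] at this
  linarith

theorem stmt_4 (c ε δ : ℝ) (hc : 0 < c) (hε : 0 < ε) (hδ : 0 < δ) :
    ∃ N : ℕ, ∀ n : ℕ, N ≤ n → ∀ a : Fin n → ℝ, (∀ i, 0 < a i) →
      SepSums a → ∀ A : ℝ, IsGreatest (Set.range a) A →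
      A ^ 2 ≤ c * (n : ℝ) ^ (-(2/3 : ℝ) - ε) * ∑ i, (a i) ^ 2 →
      (1 - δ) * (Real.sqrt 2 - 1) / (2 * Real.sqrt π) *
          (∑ i, (a i) ^ 2) ^ (-(1/2) : ℝ) ≤
        ∫ x in {x : ℝ | 1 / (4 * A) ≤ |x|},
          (sinc2pi x) ^ 2 * ∏ i, (Real.cos (2 * π * a i * x)) ^ 2 := by
  have hκ : 0 < δ * ((√2 - 1) / (2 * √π)) := by
    have : 1 < √2 := by rw [lt_sqrt] <;> norm_num
    have h2 : 0 < √2 - 1 := by linarith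
    positivity
  set κ := δ * ((√2 - 1) / (2 * √π)) with hκd
  have hbase : √(π / (2 * π ^ 2 + 0)) = √2 / (2 * √π) := by
    rw [show π / (2 * π ^ 2 + 0) = (√2 / (2 * √π)) ^ 2 from ?_, sqrt_sq (by positivity)]
    rw [div_pow, mul_pow, sq_sqrt pi_pos.le, sq_sqrt (by norm_num)]
    field_simp
    norm_num
  obtain ⟨β, hβ, hβ2⟩ : ∃ β > 0, √2 / (2 * √π) - κ / 2 < √(π / (2 * π ^ 2 + β)) := by
    have hcont : ContinuousAt (fun β : ℝ => √(π / (2 * π ^ 2 + β))) 0 := by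
      apply ContinuousAt.sqrt
      apply ContinuousAt.div (by fun_prop) (by fun_prop)
      positivity
    have hev : ∀ᶠ β in nhds (0:ℝ), √2 / (2 * √π) - κ / 2 < √(π / (2 * π ^ 2 + β)) := by
      apply hcont.tendsto.eventually_const_lt
      rw [hbase]; linarith
    have := (hev.filter_mono (nhdsWithin_le_nhds (s := Set.Ioi 0))).and self_mem_nhdsWithin
    obtain ⟨β, h1, h2⟩ := this.exists
    exact ⟨β, h2, h1⟩
  obtain ⟨ρ, hρ, hclt⟩ := clt_limit β (κ / 2) hβ (by linarith)
  have hN : ∀ᶠ n : ℕ in Filter.atTop, c * (n : ℝ) ^ (-(2/3 : ℝ) - ε) < ρ ^ 2 := by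
    have h1 := (tendsto_rpow_neg_atTop (y := 2/3 + ε) (by positivity)).comp tendsto_natCast_atTop_atTop
    have h2 := h1.const_mul c
    rw [mul_zero] at h2
    have h3 := h2.eventually_lt_const (show (0:ℝ) < ρ ^ 2 by positivity)
    filter_upwards [h3] with n hn
    rw [show -(2/3 : ℝ) - ε = -(2/3 + ε) by ring]
    exact hn
  obtain ⟨N, hN⟩ := Filter.eventually_atTop.mp hN
  refine ⟨N, fun n hn a ha hsep A hA hAs => ?_⟩
  have hN' := hN n hn
  obtain ⟨⟨i0, hi0⟩, hAub⟩ := hA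
  have hAa : ∀ i, a i ≤ A := fun i => hAub ⟨i, rfl⟩
  have hA1 : 1 ≤ A := by
    have := hsep {i0} ∅ (Finset.singleton_ne_empty i0)
    simp only [Finset.sum_singleton, Finset.sum_empty, sub_zero] at this
    rwa [abs_of_pos (ha i0), hi0] at this
  have hA0 : 0 < A := by linarith
  have hsumpos : 0 < ∑ i, a i ^ 2 :=
    Finset.sum_pos (fun i _ => by have := ha i; positivity) ⟨i0, Finset.mem_univ _⟩
  set σ := √(∑ i, a i ^ 2) with hσd
  have hσ : 0 < σ := sqrt_pos.mpr hsumpos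
  have hs : ∑ i, a i ^ 2 = σ ^ 2 := (sq_sqrt hsumpos.le).symm
  have hAρ : A ≤ ρ * σ := by
    refine (sq_le_sq₀ hA0.le (by positivity)).mp ?_
    rw [mul_pow, ← hs]
    exact hAs.trans (mul_le_mul_of_nonneg_right hN'.le hsumpos.le)
  have hM := hclt n a σ hσ hs
    (fun i => by rw [abs_of_pos (ha i)]; exact (hAa i).trans hAρ) (hA1.trans hAρ)
  have hM2 := M_lower a hsep (β * σ ^ 2) (by positivity)
  have htot := total_lower a
  have hcen := central a ha A hA0 hAa σ hσ hs
  have hm : MeasurableSet {x : ℝ | 1 / (4 * A) ≤ |x|} :=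
    measurableSet_le measurable_const (by fun_prop)
  have hsplit := integral_add_compl hm (total_integrable a)
  have hsc : ∀ x, sinc2pi x = sinc (2 * π * x) := by
    intro x
    by_cases h : x = 0
    · simp [sinc2pi, h]
    · rw [sinc_of_ne_zero (by positivity), sinc2pi, if_neg h]
  simp only [hsc]
  have hpow : (∑ i, a i ^ 2) ^ (-(1/2) : ℝ) = σ⁻¹ := by
    rw [rpow_neg hsumpos.le, hσd, sqrt_eq_rpow]
  rw [hpow]
  have hI : (√2 / (2 * √π) - κ) * σ⁻¹ ≤ (1 / 2) ^ n / 2 := by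
    rw [← div_eq_mul_inv, div_le_iff₀ hσ, mul_comm _ σ]
    refine le_trans ?_ (mul_le_mul_of_nonneg_left hM2 hσ.le)
    linarith
  have hfin : (1 - δ) * (√2 - 1) / (2 * √π) * σ⁻¹ =
      (√2 / (2 * √π) - κ) * σ⁻¹ - 1 / (2 * √π) * σ⁻¹ := by
    rw [hκd]; ring
  rw [hfin]
  linarith
end

section
/- For all c > 0 and δ > 0 there exists N such that for all n ≥ N and all families a : Fin n → ℝ of positive reals whose subset sums are 1-separated and whose maximum A = max_i a_i satisfies A² ≤ c · n^{−1/2} · ∑_{i=1}^{n} a_i², one has ∫_{|x| ≤ 1/(4A)} | (sin(2πx)/(2πx)) · ∏_{i=1}^{n} cos(2π a_i x) − exp(−2π² x² ∑_{i=1}^{n} a_i²) |² dx ≤ δ · 2^{−n}. -/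
open Real MeasureTheory Finset

lemma aux_mul_cos_le_sin {t : ℝ} (h0 : 0 ≤ t) (h1 : t ≤ π / 2) : t * cos t ≤ sin t := by
  rcases h1.lt_or_eq with h | h
  · have hc : 0 < cos t := cos_pos_of_mem_Ioo ⟨by linarith [pi_pos], h⟩
    have := Real.le_tan h0 h
    rw [Real.tan_eq_sin_div_cos, le_div_iff₀ hc] at this
    exact this
  · rw [h]; simp

lemma aux_cos_le_exp_nonneg {t : ℝ} (h0 : 0 ≤ t) (h1 : t ≤ π / 2) :
    cos t ≤ exp (-(t ^ 2 / 2)) := by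
  have hd : ∀ x : ℝ, HasDerivAt (fun x => cos x * exp (x ^ 2 / 2))
      ((x * cos x - sin x) * exp (x ^ 2 / 2)) x := by
    intro x
    have h2 : HasDerivAt (fun x : ℝ => x ^ 2 / 2) x x := by
      exact ((hasDerivAt_pow 2 x).div_const 2).congr_deriv (by simp)
    exact ((Real.hasDerivAt_cos x).mul h2.exp).congr_deriv (by ring)
  have hanti : AntitoneOn (fun x => cos x * exp (x ^ 2 / 2)) (Set.Icc 0 (π / 2)) := by
    apply antitoneOn_of_deriv_nonpos (convex_Icc _ _)
    · exact fun x _ => (hd x).continuousAt.continuousWithinAt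
    · exact fun x _ => (hd x).differentiableAt.differentiableWithinAt
    · intro x hx
      rw [interior_Icc] at hx
      rw [(hd x).deriv]
      have := aux_mul_cos_le_sin hx.1.le hx.2.le
      exact mul_nonpos_of_nonpos_of_nonneg (by linarith) (exp_pos _).le
  have := hanti (Set.left_mem_Icc.2 (by linarith)) ⟨h0, h1⟩ h0
  simp at this
  rw [exp_neg, ← one_div, le_div_iff₀ (exp_pos _)]
  exact this

lemma aux_cos_le_exp {t : ℝ} (h1 : |t| ≤ π / 2) : cos t ≤ exp (-(t ^ 2 / 2)) := by
  have := aux_cos_le_exp_nonneg (abs_nonneg t) h1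
  rwa [cos_abs, sq_abs] at this

lemma aux_exp_neg_le {u : ℝ} (hu : 0 ≤ u) : exp (-u) ≤ 1 - u + u ^ 2 / 2 := by
  have h := Real.quadratic_le_exp_of_nonneg hu
  have hpos : 0 < 1 + u + u ^ 2 / 2 := by positivity
  rw [exp_neg, inv_le_comm₀ (exp_pos _) (by nlinarith [sq_nonneg (u - 1)])]
  refine le_trans ?_ h
  rw [inv_le_iff_one_le_mul₀ (by nlinarith [sq_nonneg (u - 1)])]
  nlinarith [sq_nonneg (u ^ 2)]

lemma aux_exp_sub_cos (t : ℝ) : exp (-(t ^ 2 / 2)) - cos t ≤ t ^ 4 / 8 := by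
  have h1 := aux_exp_neg_le (u := t ^ 2 / 2) (by positivity)
  have h2 := Real.one_sub_sq_div_two_le_cos (x := t)
  nlinarith

lemma aux_prod_s5 {ι : Type*} (s : Finset ι) (f g : ι → ℝ)
    (h0 : ∀ i, 0 ≤ f i) (h1 : ∀ i, f i ≤ g i) (h2 : ∀ i, g i ≤ 1) :
    ∏ i ∈ s, g i - ∏ i ∈ s, f i ≤ ∑ i ∈ s, (g i - f i) := by
  classical
  induction s using Finset.induction_on with
  | empty => simp
  | insert i s hi ih =>
    rw [prod_insert hi, prod_insert hi, sum_insert hi]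
    have hf0 : 0 ≤ ∏ i ∈ s, f i := prod_nonneg fun i _ => h0 i
    have hfg : ∏ i ∈ s, f i ≤ ∏ i ∈ s, g i := prod_le_prod (fun i _ => h0 i) fun i _ => h1 i
    have hf1 : ∏ i ∈ s, f i ≤ 1 := prod_le_one (fun i _ => h0 i) fun i _ => (h1 i).trans (h2 i)
    have e1 : g i * (∏ i ∈ s, g i - ∏ i ∈ s, f i) ≤ 1 * (∏ i ∈ s, g i - ∏ i ∈ s, f i) :=
      mul_le_mul_of_nonneg_right (h2 i) (by linarith)
    have e2 : (g i - f i) * ∏ i ∈ s, f i ≤ (g i - f i) * 1 :=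
      mul_le_mul_of_nonneg_left hf1 (by linarith [h1 i])
    nlinarith

lemma aux_sinc {x : ℝ} (hx : |x| ≤ 1 / 4) :
    0 ≤ sinc2pi x ∧ sinc2pi x ≤ 1 ∧ 1 - sinc2pi x ≤ (2 * π * x) ^ 2 / 2 := by
  have key : ∀ y : ℝ, 0 < y → y ≤ π / 2 →
      0 ≤ sin y / y ∧ sin y / y ≤ 1 ∧ 1 - sin y / y ≤ y ^ 2 / 2 := by
    intro y hy hy2
    refine ⟨div_nonneg (sin_nonneg_of_nonneg_of_le_pi hy.le (by linarith [pi_pos])) hy.le, ?_, ?_⟩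
    · rw [div_le_one hy]; exact sin_le hy.le
    · have h1 : cos y ≤ sin y / y := by
        rw [le_div_iff₀ hy, mul_comm]; exact aux_mul_cos_le_sin hy.le hy2
      have h2 := Real.one_sub_sq_div_two_le_cos (x := y)
      linarith
  unfold sinc2pi
  split_ifs with h
  · simp [h]
  · rw [abs_le] at hx
    rcases lt_or_gt_of_ne h with h | h
    · have := key (2 * π * (-x)) (by have := pi_pos; have : 0 < -x := by linarith
                                     positivity) (by nlinarith [pi_pos])
      have e : 2 * π * (-x) = - (2 * π * x) := by ring
      rw [e, sin_neg, neg_div_neg_eq, neg_sq] at this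
      exact this
    · exact key (2 * π * x) (by positivity) (by nlinarith [pi_pos])

lemma aux_var {ι : Type*} (s : Finset ι) (a : ι → ℝ) :
    ∑ S ∈ s.powerset, (∑ i ∈ S, a i - (∑ i ∈ s, a i) / 2) ^ 2
      = 2 ^ s.card / 4 * ∑ i ∈ s, a i ^ 2 := by
  classical
  induction s using Finset.induction_on with
  | empty => simp
  | insert i s hi ih =>
    rw [sum_powerset_insert hi, sum_insert hi, sum_insert hi, card_insert_of_notMem hi,
      ← sum_add_distrib]
    have : ∀ t ∈ s.powerset, (∑ j ∈ t, a j - (a i + ∑ j ∈ s, a j) / 2) ^ 2 +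
        (∑ j ∈ insert i t, a j - (a i + ∑ j ∈ s, a j) / 2) ^ 2
        = 2 * (∑ j ∈ t, a j - (∑ j ∈ s, a j) / 2) ^ 2 + a i ^ 2 / 2 := by
      intro t ht
      rw [sum_insert (fun h => hi (mem_powerset.1 ht h))]
      ring
    rw [sum_congr rfl this, sum_add_distrib, ← mul_sum, ih, sum_const, card_powerset]
    simp
    ring

lemma aux_moser {n : ℕ} (hn : 2 ≤ n) (a : Fin n → ℝ) (hs : SepSums a) :
    (4 : ℝ) ^ n / 8 ≤ ∑ i, a i ^ 2 := by
  classical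
  obtain ⟨m, rfl⟩ := Nat.exists_eq_add_of_le' hn
  have hv := aux_var univ a
  set Y : Finset (Fin (m + 2)) → ℝ := fun S => ∑ i ∈ S, a i - (∑ i, a i) / 2 with hY
  have hfl : Function.Injective fun S => ⌊Y S⌋ := by
    intro S T hST
    by_contra hne
    have h1 := hs S T hne
    have h2 := Int.abs_sub_lt_one_of_floor_eq_floor hST
    simp only [hY] at h2
    rw [sub_sub_sub_cancel_right] at h2
    linarith
  set M : ℤ := 2 ^ m with hM
  set B := (univ : Finset (Finset (Fin (m + 2)))).filter (fun S => |Y S| < (2 : ℝ) ^ m) with hB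
  have hBc : B.card ≤ 2 ^ (m + 1) := by
    have : (B.image fun S => ⌊Y S⌋) ⊆ Finset.Ico (-M) M := by
      intro z hz
      obtain ⟨S, hS, rfl⟩ := mem_image.1 hz
      have h := (mem_filter.1 hS).2
      rw [abs_lt] at h
      rw [Finset.mem_Ico]
      refine ⟨Int.le_floor.2 ?_, Int.floor_lt.2 ?_⟩
      · simp only [hM]; push_cast; exact h.1.le
      · simp only [hM]; push_cast; exact h.2
    have h := card_le_card this
    rw [card_image_of_injective _ hfl, Int.card_Ico] at h
    have h3 : (M - -M).toNat = 2 ^ (m + 1) := by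
      have : M - -M = ((2 ^ (m + 1) : ℕ) : ℤ) := by
        simp only [hM]; push_cast; ring
      rw [this, Int.toNat_natCast]
    rwa [h3] at h
  set C := (univ : Finset (Finset (Fin (m + 2)))).filter (fun S => ¬ |Y S| < (2 : ℝ) ^ m) with hC
  have hBC : B.card + C.card = 2 ^ (m + 2) := by
    rw [hB, hC, card_filter_add_card_filter_not]
    simp
  have hCc : 2 ^ (m + 1) ≤ C.card := by
    have : 2 ^ (m + 2) = 2 ^ (m + 1) + 2 ^ (m + 1) := by ring
    omega
  have hsum : (2 : ℝ) ^ (m + 1) * 4 ^ m ≤ ∑ S, Y S ^ 2 := by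
    calc (2 : ℝ) ^ (m + 1) * 4 ^ m ≤ C.card * 4 ^ m := by
          gcongr; exact_mod_cast hCc
      _ = ∑ S ∈ C, (4 : ℝ) ^ m := by rw [sum_const, nsmul_eq_mul]
      _ ≤ ∑ S ∈ C, Y S ^ 2 := by
          apply sum_le_sum
          intro S hS
          have h := not_lt.1 (mem_filter.1 hS).2
          rw [← sq_abs (Y S)]
          calc (4 : ℝ) ^ m = (2 ^ m) ^ 2 := by rw [← pow_mul, mul_comm, pow_mul]; norm_num
            _ ≤ _ := by gcongr
      _ ≤ _ := sum_le_sum_of_subset_of_nonneg (filter_subset _ _) fun _ _ _ => sq_nonneg _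
  rw [powerset_univ] at hv
  change ∑ S, Y S ^ 2 = _ at hv
  rw [hv, card_univ, Fintype.card_fin] at hsum
  have h2 : (0 : ℝ) < 2 ^ (m + 1) := by positivity
  have : (2 : ℝ) ^ (m + 1) * 4 ^ m ≤ 2 ^ (m + 1) * ((∑ i, a i ^ 2) / 2) := by
    calc _ ≤ _ := hsum
      _ = _ := by ring
  have := le_of_mul_le_mul_left this h2
  rw [pow_add]
  linarith

lemma aux_w1 {w : ℝ} (hw : 0 ≤ w) : exp (-w) * w ≤ 2 * exp (-(w / 2)) := by
  have h : w / 2 + 1 ≤ exp (w / 2) := add_one_le_exp _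
  have e : exp (-w) * exp (w / 2) = exp (-(w / 2)) := by rw [← exp_add]; congr 1; ring
  rw [← e]
  nlinarith [exp_pos (-w)]

lemma aux_w2 {w : ℝ} (hw : 0 ≤ w) : exp (-w) * w ^ 2 ≤ 8 * exp (-(w / 2)) := by
  have h := Real.quadratic_le_exp_of_nonneg (x := w / 2) (by positivity)
  have e : exp (-w) * exp (w / 2) = exp (-(w / 2)) := by rw [← exp_add]; congr 1; ring
  rw [← e]
  have : w ^ 2 ≤ 8 * exp (w / 2) := by nlinarith
  nlinarith [exp_pos (-w)]

lemma aux_point {n : ℕ} (a : Fin n → ℝ) (ha : ∀ i, 0 < a i) (A : ℝ) (hA : ∀ i, a i ≤ A)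
    (hA1 : 1 ≤ A) (V : ℝ) (hV : V = ∑ i, a i ^ 2) (hVpos : 0 < V) (x : ℝ)
    (hx : |x| ≤ 1 / (4 * A)) :
    |sinc2pi x * ∏ i, Real.cos (2 * π * a i * x) -
            Real.exp (-2 * π ^ 2 * x ^ 2 * V)| ^ 2 ≤
      12 * (A ^ 2 / V) * exp (-(π ^ 2 * V) * x ^ 2) := by
  have hA0 : 0 < A := by linarith
  have hxA : |x| * A ≤ 1 / 4 := by
    rw [le_div_iff₀ (by positivity)] at hx; linarith
  obtain ⟨s0, s1, s2⟩ := aux_sinc (x := x) (by nlinarith [abs_nonneg x])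
  have ht : ∀ i, |2 * π * a i * x| ≤ π / 2 := by
    intro i
    rw [abs_mul, abs_of_pos (by have := ha i; positivity)]
    have : a i * |x| ≤ 1 / 4 :=
      (mul_le_mul_of_nonneg_right (hA i) (abs_nonneg x)).trans (by linarith)
    nlinarith [pi_pos]
  set w := 2 * π ^ 2 * x ^ 2 * V with hw
  have hw0 : 0 ≤ w := by positivity
  have hG : ∏ i, exp (-((2 * π * a i * x) ^ 2 / 2)) = exp (-w) := by
    rw [← exp_sum]; congr 1
    rw [hw, hV, mul_sum, ← sum_neg_distrib]
    apply sum_congr rfl; intros; ring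
  set P := ∏ i, Real.cos (2 * π * a i * x) with hP
  have hc0 : ∀ i, 0 ≤ Real.cos (2 * π * a i * x) := fun i =>
    cos_nonneg_of_mem_Icc ⟨by linarith [(abs_le.1 (ht i)).1], (abs_le.1 (ht i)).2⟩
  have hP0 : 0 ≤ P := prod_nonneg fun i _ => hc0 i
  have hPG : P ≤ exp (-w) := by
    rw [← hG]; exact prod_le_prod (fun i _ => hc0 i) fun i _ => aux_cos_le_exp (ht i)
  have hdiff : exp (-w) - P ≤ w ^ 2 * (A ^ 2 / V) / 2 := by
    rw [← hG]
    refine (aux_prod_s5 univ _ _ hc0 (fun i => aux_cos_le_exp (ht i)) fun i => ?_).trans ?_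
    · rw [exp_le_one_iff, neg_nonpos]; positivity
    · calc _ ≤ ∑ i, (2 * π * x) ^ 4 / 8 * A ^ 2 * a i ^ 2 := by
            apply sum_le_sum
            intro i _
            refine (aux_exp_sub_cos _).trans ?_
            have h1 : a i ^ 2 ≤ A ^ 2 := by have := ha i; have := hA i; gcongr
            calc (2 * π * a i * x) ^ 4 / 8 = (2 * π * x) ^ 4 / 8 * a i ^ 2 * a i ^ 2 := by ring
              _ ≤ _ := by gcongr
        _ = _ := by
            rw [← mul_sum, ← hV, hw]
            field_simp
            ring
  have hs' : 1 - sinc2pi x ≤ w * (A ^ 2 / V) := by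
    have : (2 * π * x) ^ 2 / 2 = w * (1 ^ 2 / V) := by rw [hw]; field_simp
    rw [this] at s2
    refine s2.trans ?_
    gcongr
  have e1 : -2 * π ^ 2 * x ^ 2 * V = -w := by rw [hw]; ring
  have e2 : -(π ^ 2 * V) * x ^ 2 = -(w / 2) := by rw [hw]; ring
  rw [e1, e2]
  set s := sinc2pi x
  set G := exp (-w) with hGd
  have hG0 : 0 < G := exp_pos _
  have hsP : s * P ≤ P := by nlinarith
  have hsP0 : 0 ≤ s * P := by positivity
  set r := A ^ 2 / V with hr
  have hr0 : 0 ≤ r := by positivity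
  have hGP : G ≤ 1 := by rw [hGd, exp_le_one_iff]; linarith
  have hd1 : G - s * P ≤ r * (w + w ^ 2 / 2) := by
    have : (1 - s) * P ≤ (1 - s) * 1 := mul_le_mul_of_nonneg_left (by linarith) (by linarith)
    nlinarith
  rw [sq_abs]
  calc (s * P - G) ^ 2 = (G - s * P) * (G - s * P) := by ring
    _ ≤ G * (r * (w + w ^ 2 / 2)) := mul_le_mul (by linarith) hd1 (by linarith) hG0.le
    _ = r * (G * w + G * w ^ 2 / 2) := by ring
    _ ≤ r * (2 * exp (-(w / 2)) + 8 * exp (-(w / 2)) / 2) := by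
        have h1 := aux_w1 hw0
        have h2 := aux_w2 hw0
        rw [← hGd] at h1 h2
        gcongr
    _ = 6 * r * exp (-(w / 2)) := by ring
    _ ≤ 12 * r * exp (-(w / 2)) := by gcongr; norm_num

theorem stmt_5 (c δ : ℝ) (hc : 0 < c) (hδ : 0 < δ) :
    ∃ N : ℕ, ∀ n : ℕ, N ≤ n → ∀ a : Fin n → ℝ, (∀ i, 0 < a i) →
      SepSums a → ∀ A : ℝ, IsGreatest (Set.range a) A →
      A ^ 2 ≤ c * (n : ℝ) ^ (-(1/2) : ℝ) * ∑ i, (a i) ^ 2 →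
      (∫ x in {x : ℝ | |x| ≤ 1 / (4 * A)},
          |sinc2pi x * ∏ i, Real.cos (2 * π * a i * x) -
            Real.exp (-2 * π ^ 2 * x ^ 2 * ∑ i, (a i) ^ 2)| ^ 2) ≤
        δ * 2 ^ (-(n : ℝ)) := by
  refine ⟨max 2 ⌈(36 * c / δ) ^ 2⌉₊, fun n hn a ha hs A hA hAc => ?_⟩
  have hn2 : 2 ≤ n := (le_max_left _ _).trans hn
  have hnN : (36 * c / δ) ^ 2 ≤ n := Nat.ceil_le.1 ((le_max_right _ _).trans hn)
  have hAi : ∀ i, a i ≤ A := fun i => hA.2 ⟨i, rfl⟩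
  have hA1 : 1 ≤ A := by
    have i : Fin n := ⟨0, by omega⟩
    have := hs {i} ∅ (by simp)
    simp only [sum_singleton, sum_empty, sub_zero, abs_of_pos (ha i)] at this
    exact this.trans (hAi i)
  have hm := aux_moser hn2 a hs
  obtain ⟨V, hV⟩ : ∃ V, V = ∑ i, a i ^ 2 := ⟨_, rfl⟩
  rw [← hV] at hm hAc ⊢
  have hVpos : 0 < V := lt_of_lt_of_le (by positivity) hm
  have hb : 0 < π ^ 2 * V := by positivity
  have hmeas : MeasurableSet {x : ℝ | |x| ≤ 1 / (4 * A)} :=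
    measurableSet_le (by fun_prop) (by fun_prop)
  have hint : Integrable fun x : ℝ => 12 * (A ^ 2 / V) * exp (-(π ^ 2 * V) * x ^ 2) :=
    (integrable_exp_neg_mul_sq hb).const_mul _
  have hr0 : 0 ≤ A ^ 2 / V := by positivity
  have h1 : (∫ x in {x : ℝ | |x| ≤ 1 / (4 * A)},
          |sinc2pi x * ∏ i, Real.cos (2 * π * a i * x) -
            Real.exp (-2 * π ^ 2 * x ^ 2 * V)| ^ 2) ≤
      ∫ x in {x : ℝ | |x| ≤ 1 / (4 * A)}, 12 * (A ^ 2 / V) * exp (-(π ^ 2 * V) * x ^ 2) := by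
    apply integral_mono_of_nonneg
    · exact Filter.Eventually.of_forall fun x => by positivity
    · exact hint.integrableOn
    · refine (ae_restrict_iff' hmeas).2 (Filter.Eventually.of_forall fun x hx => ?_)
      exact aux_point a ha A hAi hA1 V hV hVpos x hx
  have h2 : (∫ x in {x : ℝ | |x| ≤ 1 / (4 * A)}, 12 * (A ^ 2 / V) * exp (-(π ^ 2 * V) * x ^ 2))
      ≤ ∫ x, 12 * (A ^ 2 / V) * exp (-(π ^ 2 * V) * x ^ 2) :=
    setIntegral_le_integral hint (Filter.Eventually.of_forall fun x => by positivity)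
  refine (h1.trans h2).trans ?_
  rw [integral_const_mul, integral_gaussian]
  have hsq : √(π / (π ^ 2 * V)) ≤ 3 * 2 ^ (-(n : ℝ)) := by
    rw [Real.sqrt_le_left (by positivity), rpow_neg (by norm_num), rpow_natCast]
    have e : ((3 : ℝ) * (2 ^ n)⁻¹) ^ 2 = 9 / 4 ^ n := by
      rw [mul_pow, inv_pow, ← pow_mul, mul_comm n 2, pow_mul]; norm_num; rfl
    rw [e, div_le_div_iff₀ hb (by positivity)]
    have h3 := pi_gt_three
    have h4 : π * 4 ^ n ≤ π * (8 * V) := by gcongr; linarith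
    nlinarith [mul_pos (mul_pos pi_pos hVpos) (sub_pos.2 h3), mul_pos pi_pos hVpos]
  have hn0 : (0 : ℝ) < n := by positivity
  have hr : A ^ 2 / V ≤ c * (n : ℝ) ^ (-(1/2) : ℝ) := by rwa [div_le_iff₀ hVpos]
  have hrn : 36 * (c * (n : ℝ) ^ (-(1/2) : ℝ)) ≤ δ := by
    rw [rpow_neg hn0.le, ← sqrt_eq_rpow]
    have h5 : 36 * c / δ ≤ √n := Real.le_sqrt_of_sq_le hnN
    have h6 : 0 < √(n : ℝ) := sqrt_pos.2 hn0
    rw [div_le_iff₀ hδ] at h5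
    rw [← div_eq_mul_inv, ← mul_div_assoc, div_le_iff₀ h6]
    linarith
  calc 12 * (A ^ 2 / V) * √(π / (π ^ 2 * V))
      ≤ 12 * (c * (n : ℝ) ^ (-(1/2) : ℝ)) * (3 * 2 ^ (-(n : ℝ))) := by gcongr
    _ = 36 * (c * (n : ℝ) ^ (-(1/2) : ℝ)) * 2 ^ (-(n : ℝ)) := by ring
    _ ≤ δ * 2 ^ (-(n : ℝ)) := by gcongr
end

section
/- Let n be a positive integer and let a : Fin n → ℝ have a i > 0 for all i, with 1-separated subset sums. Then ∑_{i=1}^{n} a_i² ≥ (4^n − 1)/3. -/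
open Real Finset

theorem aux_pow {ι : Type*} [DecidableEq ι] (a : ι → ℝ) (s : Finset ι) :
    ∑ S ∈ s.powerset, (2 * ∑ i ∈ S, a i - ∑ i ∈ s, a i) ^ 2 = 2 ^ s.card * ∑ i ∈ s, a i ^ 2 := by
  induction s using Finset.induction_on with
  | empty => simp
  | insert x s hx ih =>
    rw [Finset.sum_powerset_insert hx, Finset.sum_insert hx, Finset.sum_insert hx,
      Finset.card_insert_of_notMem hx, ← Finset.sum_add_distrib]
    have h1 : ∀ S ∈ s.powerset, (2 * ∑ i ∈ S, a i - (a x + ∑ i ∈ s, a i)) ^ 2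
        + (2 * ∑ i ∈ insert x S, a i - (a x + ∑ i ∈ s, a i)) ^ 2
        = 2 * (2 * ∑ i ∈ S, a i - ∑ i ∈ s, a i) ^ 2 + 2 * a x ^ 2 := by
      intro S hS
      have hxS : x ∉ S := fun h => hx (Finset.mem_powerset.1 hS h)
      rw [Finset.sum_insert hxS]
      ring
    rw [Finset.sum_congr rfl h1, Finset.sum_add_distrib, ← Finset.mul_sum, ih,
      Finset.sum_const, Finset.card_powerset, nsmul_eq_mul]
    push_cast
    ring

theorem aux_pairs {N : ℕ} (x : Fin N → ℝ) :
    ∑ i, ∑ j, (x i - x j) ^ 2 = 2 * N * ∑ i, x i ^ 2 - 2 * (∑ i, x i) ^ 2 := by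
  have h : ∀ i j, (x i - x j) ^ 2 = x i ^ 2 + x j ^ 2 - 2 * (x i * x j) := by
    intro i j; ring
  simp only [h, Finset.sum_sub_distrib, Finset.sum_add_distrib, ← Finset.mul_sum,
    ← Finset.sum_mul, Finset.sum_const, Finset.card_univ, Fintype.card_fin, nsmul_eq_mul]
  ring

theorem aux_sum1 (N : ℕ) : ∑ i : Fin N, ((i : ℕ) : ℝ) = N * (N - 1) / 2 := by
  induction N with
  | zero => simp
  | succ k ih =>
    rw [Fin.sum_univ_castSucc]
    simp only [Fin.val_castSucc, Fin.val_last, ih]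
    push_cast
    ring

theorem aux_sum2 (N : ℕ) :
    ∑ i : Fin N, ((i : ℕ) : ℝ) ^ 2 = N * (N - 1) * (2 * N - 1) / 6 := by
  induction N with
  | zero => simp
  | succ k ih =>
    rw [Fin.sum_univ_castSucc]
    simp only [Fin.val_castSucc, Fin.val_last, ih]
    push_cast
    ring

theorem aux_main_s7 {N : ℕ} (e : Fin N → ℝ) (c : ℝ)
    (he : ∀ i j, i < j → e i + 1 ≤ e j) :
    (N : ℝ) * ((N : ℝ) ^ 2 - 1) / 3 ≤ ∑ i, (2 * e i - c) ^ 2 := by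
  rcases N with _ | m
  · simp
  have hm : Monotone (fun k : Fin (m + 1) => e k - ((k : ℕ) : ℝ)) := by
    rw [Fin.monotone_iff_le_succ]
    intro i
    have := he i.castSucc i.succ Fin.castSucc_lt_succ
    simp only [Fin.val_castSucc, Fin.val_succ]
    push_cast
    linarith
  have key : ∀ i j : Fin (m + 1), 4 * (((i : ℕ) : ℝ) - ((j : ℕ) : ℝ)) ^ 2 ≤
      ((2 * e i - c) - (2 * e j - c)) ^ 2 := by
    intro i j
    rcases le_total i j with h | h
    · have h1 := hm h
      have h2 : ((i : ℕ) : ℝ) ≤ ((j : ℕ) : ℝ) := by exact_mod_cast h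
      simp only at h1
      nlinarith
    · have h1 := hm h
      have h2 : ((j : ℕ) : ℝ) ≤ ((i : ℕ) : ℝ) := by exact_mod_cast h
      simp only at h1
      nlinarith
  have hs := Finset.sum_le_sum fun i (_ : i ∈ (Finset.univ : Finset (Fin (m + 1)))) =>
    Finset.sum_le_sum fun j (_ : j ∈ (Finset.univ : Finset (Fin (m + 1)))) => key i j
  simp only [← Finset.mul_sum] at hs
  rw [aux_pairs (fun i : Fin (m + 1) => ((i : ℕ) : ℝ)), aux_pairs (fun i => 2 * e i - c),
    aux_sum1, aux_sum2] at hs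
  have hN : (0 : ℝ) < ((m + 1 : ℕ) : ℝ) := by positivity
  generalize ((m + 1 : ℕ) : ℝ) = M at *
  have h3 := sq_nonneg (∑ i, (2 * e i - c))
  refine le_of_mul_le_mul_left ?_ (show (0 : ℝ) < 2 * M by linarith)
  nlinarith

theorem stmt_7 (n : ℕ) (hn : 0 < n) (a : Fin n → ℝ) (ha : ∀ i, 0 < a i)
    (hsep : SepSums a) :
    ((4 : ℝ) ^ n - 1) / 3 ≤ ∑ i, (a i) ^ 2 := by
  classical
  set f : Finset (Fin n) → ℝ := fun S => ∑ i ∈ S, a i with hf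
  have hinj : Function.Injective f := by
    intro S T h
    by_contra hne
    have := hsep S T hne
    simp only [hf] at h
    rw [h, sub_self, abs_zero] at this
    linarith
  have hcard : (Finset.univ.image f).card = 2 ^ n := by
    rw [Finset.card_image_of_injective _ hinj]
    simp
  set e := (Finset.univ.image f).orderEmbOfFin hcard with he
  have hstep : ∀ i j, i < j → e i + 1 ≤ e j := by
    intro i j hij
    have hlt : e i < e j := e.strictMono hij
    obtain ⟨S, -, hS⟩ := Finset.mem_image.1 (Finset.orderEmbOfFin_mem _ hcard i)
    obtain ⟨T, -, hT⟩ := Finset.mem_image.1 (Finset.orderEmbOfFin_mem _ hcard j)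
    rw [← he] at hS hT
    have hne : T ≠ S := by
      rintro rfl
      rw [← hS, ← hT] at hlt
      exact lt_irrefl _ hlt
    have h1 : 1 ≤ |f T - f S| := hsep T S hne
    rw [hS, hT, abs_of_pos (by linarith)] at h1
    linarith
  have h1 := aux_main_s7 e (∑ i, a i) hstep
  have h2 : ∑ i, (2 * e i - ∑ i, a i) ^ 2 = ∑ S, (2 * f S - ∑ i, a i) ^ 2 := by
    rw [← Finset.sum_image (s := Finset.univ) (g := f) (f := fun y => (2 * y - ∑ i, a i) ^ 2)
      (fun x _ y _ h => hinj h), ← Finset.image_orderEmbOfFin_univ _ hcard,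
      Finset.sum_image (fun x _ y _ h => e.injective h)]
  have h3 := aux_pow a Finset.univ
  rw [Finset.powerset_univ, Finset.card_univ, Fintype.card_fin] at h3
  rw [h2, h3] at h1
  push_cast at h1
  have h4 : (4 : ℝ) ^ n = (2 ^ n) ^ 2 := by
    rw [← pow_mul, mul_comm, pow_mul]; norm_num
  rw [h4]
  refine le_of_mul_le_mul_left ?_ (show (0 : ℝ) < 2 ^ n by positivity)
  linarith
end

section
/- Let n be a positive integer and let a : Fin n → ℝ have a i > 0 for all i, with 1-separated subset sums. Then the maximum element A = max_i a_i satisfies A ≥ √((4^n − 1)/(3n)). -/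
open Real Finset

lemma moment_aux {n : ℕ} (a : Fin n → ℝ) (U : Finset (Fin n)) : ∀ c : ℝ,
    ∑ S ∈ U.powerset, (2 * ∑ i ∈ S, a i - ∑ i ∈ U, a i + c) ^ 2
      = 2 ^ #U * (c ^ 2 + ∑ i ∈ U, a i ^ 2) := by
  induction U using Finset.induction_on with
  | empty => intro c; simp
  | insert x U hx ih =>
    intro c
    rw [Finset.sum_powerset_insert hx, Finset.card_insert_of_notMem hx,
      Finset.sum_insert hx, Finset.sum_insert hx]
    have h1 := ih (c - a x)
    have h2 := ih (c + a x)
    have e1 : ∑ S ∈ U.powerset, (2 * ∑ i ∈ S, a i - (a x + ∑ i ∈ U, a i) + c) ^ 2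
        = ∑ S ∈ U.powerset, (2 * ∑ i ∈ S, a i - ∑ i ∈ U, a i + (c - a x)) ^ 2 :=
      Finset.sum_congr rfl fun S _ => by ring
    have e2 : ∑ S ∈ U.powerset, (2 * ∑ i ∈ insert x S, a i - (a x + ∑ i ∈ U, a i) + c) ^ 2
        = ∑ S ∈ U.powerset, (2 * ∑ i ∈ S, a i - ∑ i ∈ U, a i + (c + a x)) ^ 2 :=
      Finset.sum_congr rfl fun S hS => by
        rw [Finset.sum_insert (fun h => hx (Finset.mem_powerset.1 hS h))]; ring
    rw [e1, e2, h1, h2]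
    ring

lemma pair_sum {ι : Type*} (s : Finset ι) (x : ι → ℝ) :
    ∑ i ∈ s, ∑ j ∈ s, (x i - x j) ^ 2 = 2 * #s * ∑ i ∈ s, x i ^ 2 - 2 * (∑ i ∈ s, x i) ^ 2 := by
  have h : ∀ i ∈ s, ∑ j ∈ s, (x i - x j) ^ 2
      = #s * x i ^ 2 - 2 * (∑ j ∈ s, x j) * x i + ∑ j ∈ s, x j ^ 2 := by
    intro i _
    have : ∀ j ∈ s, (x i - x j) ^ 2 = x i ^ 2 - x j * (2 * x i) + x j ^ 2 := fun j _ => by ring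
    rw [Finset.sum_congr rfl this, Finset.sum_add_distrib, Finset.sum_sub_distrib,
      ← Finset.sum_mul]
    simp
    ring
  rw [Finset.sum_congr rfl h, Finset.sum_add_distrib, Finset.sum_sub_distrib,
    ← Finset.mul_sum, ← Finset.mul_sum]
  simp
  ring

lemma range_pair (N : ℕ) :
    ∑ i : Fin N, ∑ j : Fin N, ((i : ℝ) - j) ^ 2 = (N : ℝ) ^ 2 * (N ^ 2 - 1) / 6 := by
  have h1 : ∀ N : ℕ, ∑ i ∈ range N, (i : ℝ) = N * (N - 1) / 2 := by
    intro N
    induction N with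
    | zero => simp
    | succ k ih => rw [Finset.sum_range_succ, ih]; push_cast; ring
  have h2 : ∀ N : ℕ, ∑ i ∈ range N, (i : ℝ) ^ 2 = N * (N - 1) * (2 * N - 1) / 6 := by
    intro N
    induction N with
    | zero => simp
    | succ k ih => rw [Finset.sum_range_succ, ih]; push_cast; ring
  rw [pair_sum, Fin.sum_univ_eq_sum_range (fun i => (i : ℝ)),
    Fin.sum_univ_eq_sum_range (fun i => (i : ℝ) ^ 2), h1, h2]
  simp
  ring

lemma sep_pair (V : Finset ℝ) (hV : ∀ x ∈ V, ∀ y ∈ V, x ≠ y → 1 ≤ |x - y|) :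
    (#V : ℝ) ^ 2 * (#V ^ 2 - 1) / 6 ≤ ∑ x ∈ V, ∑ y ∈ V, (x - y) ^ 2 := by
  let f := V.orderIsoOfFin rfl
  have step : ∀ k : ℕ, ∀ i j : Fin #V, i.val + k = j.val → (f i : ℝ) + k ≤ f j := by
    intro k
    induction k with
    | zero =>
      intro i j h
      have : i = j := Fin.ext (by simpa using h)
      simp [this]
    | succ k ih =>
      intro i j h
      have h1 := ih i ⟨i.val + k, by have := j.2; omega⟩ rfl
      have hlt : (⟨i.val + k, by have := j.2; omega⟩ : Fin #V) < j := by
        rw [Fin.lt_def]; simp; omega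
      have h2 : (f _ : ℝ) < f j := f.strictMono hlt
      have h3 := hV _ (f j).2 _ (f _).2 h2.ne'
      rw [abs_of_pos (by linarith)] at h3
      push_cast
      linarith
  have e : ∑ x ∈ V, ∑ y ∈ V, (x - y) ^ 2 = ∑ i, ∑ j, ((f i : ℝ) - f j) ^ 2 := by
    rw [← Finset.sum_coe_sort V, ← Equiv.sum_comp f.toEquiv]
    refine Finset.sum_congr rfl fun i _ => ?_
    rw [← Finset.sum_coe_sort V, ← Equiv.sum_comp f.toEquiv]
    rfl
  rw [e, ← range_pair]
  refine Finset.sum_le_sum fun i _ => Finset.sum_le_sum fun j _ => ?_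
  rcases le_total i j with h | h
  · have h0 : i.val ≤ j.val := h
    have := step (j - i) i j (by omega)
    rw [Nat.cast_sub h0] at this
    have h' : (i : ℝ) ≤ j := by exact_mod_cast h0
    nlinarith
  · have h0 : j.val ≤ i.val := h
    have := step (i - j) j i (by omega)
    rw [Nat.cast_sub h0] at this
    have h' : (j : ℝ) ≤ i := by exact_mod_cast h0
    nlinarith

theorem stmt_8 (n : ℕ) (hn : 0 < n) (a : Fin n → ℝ) (ha : ∀ i, 0 < a i)
    (hsep : SepSums a) (A : ℝ) (hA : IsGreatest (Set.range a) A) :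
    Real.sqrt (((4 : ℝ) ^ n - 1) / (3 * n)) ≤ A := by
  have hle : ∀ i, a i ≤ A := fun i => hA.2 ⟨i, rfl⟩
  have hA0 : 0 ≤ A := (ha ⟨0, hn⟩).le.trans (hle _)
  let s : Finset (Fin n) → ℝ := fun S => ∑ i ∈ S, a i
  have hinj : Function.Injective s := by
    intro S T h
    by_contra hne
    have h1 := hsep S T hne
    have h2 : ∑ i ∈ S, a i = ∑ i ∈ T, a i := h
    rw [h2] at h1
    norm_num at h1
  have key := sep_pair (univ.image s) (by
    intro x hx y hy hxy
    obtain ⟨S, -, rfl⟩ := Finset.mem_image.1 hx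
    obtain ⟨T, -, rfl⟩ := Finset.mem_image.1 hy
    exact hsep S T (fun h => hxy (by rw [h])))
  rw [Finset.card_image_of_injective _ hinj, Finset.sum_image hinj.injOn] at key
  simp_rw [Finset.sum_image hinj.injOn] at key
  have hm := moment_aux a univ 0
  have hp := pair_sum univ (fun S : Finset (Fin n) => 2 * s S - ∑ i, a i + 0)
  have e : ∑ S, ∑ T, ((2 * s S - ∑ i, a i + 0) - (2 * s T - ∑ i, a i + 0)) ^ 2
      = 4 * ∑ S, ∑ T, (s S - s T) ^ 2 := by
    simp_rw [Finset.mul_sum]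
    exact Finset.sum_congr rfl fun S _ => Finset.sum_congr rfl fun T _ => by ring
  rw [e] at hp
  rw [Finset.powerset_univ] at hm
  have hm' : ∑ S, (2 * s S - ∑ i, a i + 0) ^ 2 = 2 ^ n * ∑ i, a i ^ 2 := by
    simpa using hm
  rw [hm'] at hp
  have hc : ((#(univ : Finset (Finset (Fin n))) : ℕ) : ℝ) = 2 ^ n := by simp
  rw [hc] at hp key
  have hs : ∑ i, a i ^ 2 ≤ n * A ^ 2 := by
    calc ∑ i, a i ^ 2 ≤ ∑ i : Fin n, A ^ 2 :=
          Finset.sum_le_sum fun i _ => pow_le_pow_left₀ (ha i).le (hle i) 2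
      _ = n * A ^ 2 := by simp
  have h4 : (4 : ℝ) ^ n = (2 ^ n) ^ 2 := by rw [← pow_mul, mul_comm, pow_mul]; norm_num
  have hpos : (0 : ℝ) < (2 ^ n) ^ 2 := by positivity
  have hsq := sq_nonneg (∑ S, (2 * s S - ∑ i, a i + 0))
  have hmain : ((2 : ℝ) ^ n) ^ 2 * ((2 ^ n) ^ 2 - 1) ≤ (2 ^ n) ^ 2 * (3 * ∑ i, a i ^ 2) := by
    nlinarith
  have hfin := le_of_mul_le_mul_left hmain hpos
  have hn' : (0 : ℝ) < n := by exact_mod_cast hn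
  apply Real.sqrt_le_iff.2 ⟨hA0, ?_⟩
  rw [h4, div_le_iff₀ (by positivity)]
  linarith
end

section
/- Let n be a positive integer and let a : Fin n → ℝ have a i > 0 for all i, with maximum A = max_i a_i. Then for every x with |x| ≤ 1/(4A), one has 0 ≤ ∏_{i=1}^{n} cos(2π a_i x) ≤ exp(−2π² x² ∑_{i=1}^{n} a_i²). -/
open Real Finset

lemma cos_le_gauss_nonneg {t : ℝ} (h0 : 0 ≤ t) (h1 : t ≤ π / 2) :
    Real.cos t ≤ Real.exp (-(t ^ 2 / 2)) := by
  have hd : ∀ s : ℝ, HasDerivAt (fun s : ℝ => Real.cos s * Real.exp (s ^ 2 / 2))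
      ((s * Real.cos s - Real.sin s) * Real.exp (s ^ 2 / 2)) s := by
    intro s
    have h2 : HasDerivAt (fun s : ℝ => s ^ 2 / 2) s s := by
      have := (hasDerivAt_pow 2 s).div_const 2
      refine this.congr_deriv ?_
      norm_num
    have := (Real.hasDerivAt_cos s).mul h2.exp
    refine this.congr_deriv ?_
    ring
  have hanti : AntitoneOn (fun s : ℝ => Real.cos s * Real.exp (s ^ 2 / 2))
      (Set.Icc 0 (π / 2)) := by
    apply antitoneOn_of_deriv_nonpos (convex_Icc _ _)
    · exact fun s _ => (hd s).continuousAt.continuousWithinAt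
    · exact fun s _ => (hd s).differentiableAt.differentiableWithinAt
    · intro s hs
      rw [interior_Icc] at hs
      rw [(hd s).deriv]
      have hc : 0 < Real.cos s :=
        Real.cos_pos_of_mem_Ioo ⟨by linarith [hs.1, Real.pi_pos], hs.2⟩
      have ht := Real.le_tan hs.1.le hs.2
      rw [Real.tan_eq_sin_div_cos, le_div_iff₀ hc] at ht
      exact mul_nonpos_of_nonpos_of_nonneg (by linarith) (Real.exp_pos _).le
  have h := hanti (Set.left_mem_Icc.2 (h0.trans h1)) ⟨h0, h1⟩ h0
  simp only [Real.cos_zero, one_mul] at h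
  norm_num at h
  rw [Real.exp_neg, ← one_div, le_div_iff₀ (Real.exp_pos _)]
  exact h

theorem stmt_12 (n : ℕ) (hn : 0 < n) (a : Fin n → ℝ) (ha : ∀ i, 0 < a i)
    (A : ℝ) (hA : IsGreatest (Set.range a) A) (x : ℝ) (hx : |x| ≤ 1 / (4 * A)) :
    0 ≤ ∏ i, Real.cos (2 * π * a i * x) ∧
      ∏ i, Real.cos (2 * π * a i * x) ≤
        Real.exp (-2 * π ^ 2 * x ^ 2 * ∑ i, (a i) ^ 2) := by
  have hb : ∀ i, |2 * π * a i * x| ≤ π / 2 := by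
    intro i
    have hi : a i ≤ A := hA.2 ⟨i, rfl⟩
    have hAp : 0 < A := (ha i).trans_le hi
    rw [le_div_iff₀ (by positivity)] at hx
    have h1 : a i * |x| ≤ A * |x| := mul_le_mul_of_nonneg_right hi (abs_nonneg x)
    have h2 : 4 * (a i * |x|) ≤ 1 := by linarith
    rw [abs_mul, abs_of_pos (by have := ha i; positivity : 0 < 2 * π * a i)]
    nlinarith [Real.pi_pos]
  have hnn : ∀ i, 0 ≤ Real.cos (2 * π * a i * x) := fun i =>
    Real.cos_nonneg_of_mem_Icc (abs_le.1 (hb i))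
  refine ⟨Finset.prod_nonneg fun i _ => hnn i, ?_⟩
  rw [Finset.mul_sum, Real.exp_sum]
  refine Finset.prod_le_prod (fun i _ => hnn i) fun i _ => ?_
  have h := cos_le_gauss_nonneg (abs_nonneg _) (hb i)
  rw [Real.cos_abs, sq_abs] at h
  have e : -2 * π ^ 2 * x ^ 2 * a i ^ 2 = -((2 * π * a i * x) ^ 2 / 2) := by ring
  rw [e]
  exact h
end

section
/- Let n be a positive integer, M > 0, and let a : Fin n → ℝ satisfy 0 < a_i ≤ M for all i. Then ∫_{|x| ≤ 1/(4M)} ∏_{i=1}^{n} cos(2π a_i x)² dx ≥ (1/(2M)) · binom(2n, n)/4^n. -/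
open Real MeasureTheory Finset

lemma wallis_prod_aux (n : ℕ) :
    ∏ i ∈ Finset.range n, (2 * (i : ℝ) + 1) / (2 * i + 2) = (Nat.centralBinom n : ℝ) / 4 ^ n := by
  induction n with
  | zero => simp
  | succ k ih =>
    rw [Finset.prod_range_succ, ih]
    have h : ((k : ℝ) + 1) * (Nat.centralBinom (k + 1) : ℝ)
        = 2 * (2 * k + 1) * (Nat.centralBinom k : ℝ) := by
      exact_mod_cast Nat.succ_mul_centralBinom_succ k
    have hk : (k : ℝ) + 1 ≠ 0 := by positivity
    have h2 : (Nat.centralBinom (k + 1) : ℝ)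
        = 2 * (2 * k + 1) * (Nat.centralBinom k : ℝ) / (k + 1) := by
      rw [eq_div_iff hk, ← h]; ring
    have hk2 : 2 * (k : ℝ) + 2 ≠ 0 := by positivity
    rw [h2, pow_succ]
    field_simp
    ring

lemma cos_int_aux (n : ℕ) :
    ∫ x in (-(π / 2))..(π / 2), Real.cos x ^ (2 * n) = π * ((Nat.centralBinom n : ℝ) / 4 ^ n) := by
  have h := intervalIntegral.integral_comp_add_right (a := -(π / 2)) (b := π / 2)
    (fun x => Real.sin x ^ (2 * n)) (π / 2)
  simp only [Real.sin_add_pi_div_two] at h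
  rw [h, ← wallis_prod_aux, ← integral_sin_pow_even]
  congr 1 <;> ring

theorem stmt_13 (n : ℕ) (hn : 0 < n) (M : ℝ) (hM : 0 < M) (a : Fin n → ℝ)
    (ha : ∀ i, 0 < a i) (haM : ∀ i, a i ≤ M) :
    (1 / (2 * M)) * (Nat.choose (2 * n) n : ℝ) / 4 ^ n ≤
      ∫ x in {x : ℝ | |x| ≤ 1 / (4 * M)},
        ∏ i, (Real.cos (2 * π * a i * x)) ^ 2 := by
  have hpi := Real.pi_pos
  have hset : {x : ℝ | |x| ≤ 1 / (4 * M)} = Set.Icc (-(1 / (4 * M))) (1 / (4 * M)) := by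
    ext x; simp only [Set.mem_setOf_eq, Set.mem_Icc, abs_le]
  have hle : -(1 / (4 * M)) ≤ 1 / (4 * M) := by
    have : 0 < 1 / (4 * M) := by positivity
    linarith
  rw [hset, integral_Icc_eq_integral_Ioc, ← intervalIntegral.integral_of_le hle]
  have hI : ∫ x in (-(1 / (4 * M)))..(1 / (4 * M)), Real.cos (2 * π * M * x) ^ (2 * n)
      = (1 / (2 * M)) * (Nat.choose (2 * n) n : ℝ) / 4 ^ n := by
    have hc : 2 * π * M ≠ 0 := by positivity
    rw [intervalIntegral.integral_comp_mul_left (fun x => Real.cos x ^ (2 * n)) hc]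
    have e1 : 2 * π * M * (1 / (4 * M)) = π / 2 := by field_simp; norm_num
    rw [mul_neg, e1, cos_int_aux, Nat.centralBinom, smul_eq_mul]
    field_simp
  rw [← hI]
  apply intervalIntegral.integral_mono_on hle
  · exact Continuous.intervalIntegrable (by fun_prop) _ _
  · exact Continuous.intervalIntegrable (by fun_prop) _ _
  · intro x hx
    have hx' : |x| ≤ 1 / (4 * M) := abs_le.mpr hx
    have hb : 2 * π * M * |x| ≤ π / 2 := by
      calc 2 * π * M * |x| ≤ 2 * π * M * (1 / (4 * M)) := by gcongr
        _ = π / 2 := by field_simp; norm_num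
    have habs : ∀ b : ℝ, 0 < b → Real.cos (2 * π * b * x) = Real.cos (2 * π * b * |x|) := by
      intro b hb
      rw [← Real.cos_abs, abs_mul, abs_of_pos (by positivity : 0 < 2 * π * b)]
    have h0 : 0 ≤ Real.cos (2 * π * M * |x|) :=
      Real.cos_nonneg_of_mem_Icc ⟨by have : 0 ≤ 2 * π * M * |x| := by positivity
                                     linarith, hb⟩
    have hp : Real.cos (2 * π * M * x) ^ (2 * n)
        = ∏ _i : Fin n, Real.cos (2 * π * M * |x|) ^ 2 := by
      rw [habs M hM, Finset.prod_const, Finset.card_univ, Fintype.card_fin, pow_mul]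
    rw [hp]
    apply Finset.prod_le_prod
    · intro i _; positivity
    · intro i _
      rw [habs (a i) (ha i)]
      apply pow_le_pow_left₀ h0
      apply Real.cos_le_cos_of_nonneg_of_le_pi
      · have := ha i
        positivity
      · linarith
      · have := haM i
        gcongr
end

section
/- For all c > 0 and δ > 0 there exists N such that for all n ≥ N and all families a : Fin n → ℝ with 0 < a_i for every i, satisfying ∑_{i=1}^{n} a_i² ≥ 4^n/3 and A² ≤ c · n^{−1/2} · ∑_{i=1}^{n} a_i² where A = max_i a_i, one has ∫_{|x| ≤ 1/(4A)} ∏_{i=1}^{n} cos(2π a_i x)² dx ≥ (1 − δ)/(2√π) · (∑_{i=1}^{n} a_i²)^{−1/2}. -/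
open Real MeasureTheory Finset

lemma aux_cos_s14 (δ t : ℝ) (hδ : 0 < δ) (ht : t ^ 2 ≤ δ / (1 + δ)) :
    Real.exp (-((1 + δ) * t ^ 2)) ≤ Real.cos t ^ 2 := by
  have h1 : Real.cos t ^ 2 ≥ 1 - t ^ 2 := by
    have h2 : Real.sin t ^ 2 ≤ t ^ 2 := sq_le_sq.mpr (Real.abs_sin_le_abs)
    have := Real.sin_sq_add_cos_sq t
    linarith
  refine le_trans ?_ h1
  set u := t ^ 2 with hu
  have hu0 : 0 ≤ u := sq_nonneg t
  rw [le_div_iff₀ (by linarith)] at ht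
  have h3 : 1 + (1 + δ) * u ≤ Real.exp ((1 + δ) * u) := by
    linarith [Real.add_one_le_exp ((1 + δ) * u)]
  rw [Real.exp_neg]
  have h5 : 0 ≤ 1 - u := by nlinarith
  have h4 : 1 ≤ (1 - u) * (1 + (1 + δ) * u) := by nlinarith
  rw [inv_le_iff_one_le_mul₀ (Real.exp_pos _)]
  exact h4.trans (mul_le_mul_of_nonneg_left h3 h5)

lemma aux_R (δ : ℝ) (hδ : 0 < δ) : ∃ R : ℝ, 0 < R ∧
    (1 - δ) / (2 * Real.sqrt π) ≤
      ∫ y in (-R)..R, Real.exp (-((1 + δ) * (4 * π ^ 2)) * y ^ 2) := by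
  have hπ := Real.pi_pos
  have hb : 0 < (1 + δ) * (4 * π ^ 2) := by positivity
  have hT := intervalIntegral_tendsto_integral (integrable_exp_neg_mul_sq hb)
    Filter.tendsto_neg_atTop_atBot Filter.tendsto_id
  rw [integral_gaussian] at hT
  have hlt : (1 - δ) / (2 * Real.sqrt π) < √(π / ((1 + δ) * (4 * π ^ 2))) := by
    have hsp : 0 < √π := Real.sqrt_pos.mpr hπ
    have hspp : √π ^ 2 = π := Real.sq_sqrt hπ.le
    have h1 : 1 - δ < 1 / (1 + δ) := by
      rw [lt_div_iff₀ (by linarith)]; nlinarith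
    have h2 : (1 - δ) / (2 * √π) < 1 / (1 + δ) / (2 * √π) := by gcongr
    refine h2.trans_le ?_
    apply Real.le_sqrt_of_sq_le
    have h3 : (1 / (1 + δ) / (2 * √π)) ^ 2 = 1 / ((1 + δ) ^ 2 * (4 * π)) := by
      rw [div_pow, div_pow, mul_pow, hspp]; field_simp; norm_num
    have h4 : π / ((1 + δ) * (4 * π ^ 2)) = 1 / ((1 + δ) * (4 * π)) := by
      field_simp
    rw [h3, h4]
    apply one_div_le_one_div_of_le (by positivity)
    have : (1 + δ) ≤ (1 + δ) ^ 2 := by nlinarith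
    gcongr
  have hev := (hT.eventually_const_le hlt).and (Filter.eventually_gt_atTop 0)
  obtain ⟨R, h, h0⟩ := hev.exists
  exact ⟨R, h0, h⟩

theorem stmt_14 (c δ : ℝ) (hc : 0 < c) (hδ : 0 < δ) :
    ∃ N : ℕ, ∀ n : ℕ, N ≤ n → ∀ a : Fin n → ℝ, (∀ i, 0 < a i) →
      (4 : ℝ) ^ n / 3 ≤ ∑ i, (a i) ^ 2 →
      ∀ A : ℝ, IsGreatest (Set.range a) A →
      A ^ 2 ≤ c * (n : ℝ) ^ (-(1/2) : ℝ) * ∑ i, (a i) ^ 2 →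
      (1 - δ) / (2 * Real.sqrt π) * (∑ i, (a i) ^ 2) ^ (-(1/2) : ℝ) ≤
        ∫ x in {x : ℝ | |x| ≤ 1 / (4 * A)},
          ∏ i, (Real.cos (2 * π * a i * x)) ^ 2 := by
  have hπ := Real.pi_pos
  obtain ⟨R, hR, hRi⟩ := aux_R δ hδ
  have hlim : Filter.Tendsto (fun n : ℕ => 4 * π ^ 2 * R ^ 2 * c * (n : ℝ) ^ (-(1/2) : ℝ))
      Filter.atTop (nhds 0) := by
    have := ((tendsto_rpow_neg_atTop (show (0:ℝ) < 1/2 by norm_num)).comp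
      (tendsto_natCast_atTop_atTop (R := ℝ))).const_mul (4 * π ^ 2 * R ^ 2 * c)
    simpa using this
  have hev := hlim.eventually_le_const (show (0:ℝ) < δ / (1 + δ) by positivity)
  obtain ⟨N, hN⟩ := Filter.eventually_atTop.mp hev
  refine ⟨N, fun n hn a ha hS A hA hAS => ?_⟩
  have hn := hN n hn
  set ε := (n : ℝ) ^ (-(1/2) : ℝ) with hε
  set S := ∑ i, (a i) ^ 2 with hSdef
  have hS0 : 0 < S := lt_of_lt_of_le (by positivity) hS
  have hA0 : 0 < A := by
    obtain ⟨i, hi⟩ := hA.1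
    exact hi ▸ ha i
  have hs : 0 < √S := Real.sqrt_pos.mpr hS0
  have hss : √S ^ 2 = S := Real.sq_sqrt hS0.le
  have hrp : S ^ (-(1/2) : ℝ) = (√S)⁻¹ := by
    rw [Real.rpow_neg hS0.le, Real.sqrt_eq_rpow]
  -- main smallness
  have hsmall : 4 * π ^ 2 * A ^ 2 * (R / √S) ^ 2 ≤ δ / (1 + δ) := by
    refine le_trans ?_ hn
    rw [div_pow, hss, ← mul_div_assoc, div_le_iff₀ hS0]
    have : 0 ≤ 4 * π ^ 2 * R ^ 2 := by positivity
    nlinarith [mul_le_mul_of_nonneg_left hAS this]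
  have hd1 : δ / (1 + δ) ≤ 1 := by
    rw [div_le_one (by linarith)]; linarith
  have hr0 : 0 < R / √S := by positivity
  set r := R / √S with hr
  have hrA : r ≤ 1 / (4 * A) := by
    rw [le_div_iff₀ (by positivity)]
    have hp3 := Real.pi_gt_three
    have h1 : (r * (4 * A)) ^ 2 ≤ 1 ^ 2 := by
      have h2 : 0 ≤ A ^ 2 * r ^ 2 := by positivity
      have h3 : 9 ≤ π ^ 2 := by nlinarith
      nlinarith
    exact (sq_le_sq₀ (by positivity) (by norm_num)).mp h1
  have hcont : Continuous fun x : ℝ => ∏ i, (Real.cos (2 * π * a i * x)) ^ 2 := by fun_prop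
  have hset : {x : ℝ | |x| ≤ 1 / (4 * A)} = Set.Icc (-(1 / (4 * A))) (1 / (4 * A)) := by
    ext x; simp only [Set.mem_setOf_eq, Set.mem_Icc, abs_le]
  have hpt : ∀ x ∈ Set.Icc (-r) r, Real.exp (-((1 + δ) * (4 * π ^ 2)) * (√S * x) ^ 2) ≤
      ∏ i, (Real.cos (2 * π * a i * x)) ^ 2 := by
    intro x hx
    have hx2 : x ^ 2 ≤ r ^ 2 := sq_le_sq' hx.1 hx.2
    have : Real.exp (-((1 + δ) * (4 * π ^ 2)) * (√S * x) ^ 2) =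
        ∏ i, Real.exp (-((1 + δ) * (2 * π * a i * x) ^ 2)) := by
      rw [← Real.exp_sum]
      congr 1
      rw [mul_pow, hss, hSdef, Finset.sum_mul, Finset.mul_sum]
      exact Finset.sum_congr rfl fun i _ => by ring
    rw [this]
    refine Finset.prod_le_prod (fun i _ => (Real.exp_pos _).le) fun i _ => ?_
    apply aux_cos_s14 δ _ hδ
    refine le_trans ?_ hsmall
    have hai : a i ≤ A := hA.2 ⟨i, rfl⟩
    have hai2 : a i ^ 2 ≤ A ^ 2 := pow_le_pow_left₀ (ha i).le hai 2
    calc (2 * π * a i * x) ^ 2 = 4 * π ^ 2 * a i ^ 2 * x ^ 2 := by ring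
      _ ≤ _ := by gcongr
  calc (1 - δ) / (2 * Real.sqrt π) * S ^ (-(1/2) : ℝ)
      ≤ (∫ y in (-R)..R, Real.exp (-((1 + δ) * (4 * π ^ 2)) * y ^ 2)) * (√S)⁻¹ := by
        rw [hrp]; gcongr
    _ = ∫ x in (-r)..r, Real.exp (-((1 + δ) * (4 * π ^ 2)) * (√S * x) ^ 2) := by
        rw [intervalIntegral.integral_comp_mul_left
          (fun y => Real.exp (-((1 + δ) * (4 * π ^ 2)) * y ^ 2)) hs.ne']
        have : √S * r = R := by rw [hr]; field_simp
        rw [mul_neg, this, smul_eq_mul, mul_comm]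
    _ ≤ ∫ x in (-r)..r, ∏ i, (Real.cos (2 * π * a i * x)) ^ 2 := by
        apply intervalIntegral.integral_mono_on (by linarith) _ (hcont.intervalIntegrable _ _) hpt
        exact Continuous.intervalIntegrable (by fun_prop) _ _
    _ = ∫ x in Set.Ioc (-r) r, ∏ i, (Real.cos (2 * π * a i * x)) ^ 2 :=
        intervalIntegral.integral_of_le (by linarith)
    _ ≤ _ := by
        rw [hset]
        apply setIntegral_mono_set (hcont.integrableOn_Icc)
        · exact Filter.Eventually.of_forall fun x => Finset.prod_nonneg fun i _ => sq_nonneg _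
        · apply HasSubset.Subset.eventuallyLE
          intro x hx
          exact ⟨by linarith [hx.1], by linarith [hx.2]⟩
end
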